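/- arXiv:2110.15050 — 3 statements merged into one kernel-verified Lean document; each statement's English description precedes it below -/
import Mathlib

section
/- Let 0<p<1 and let r_{n,k} be the root-cluster weights for random recursive trees (the case φ(δ)=1 for all δ). Then the bivariate exponential generating function R(x,u) = Σ_{n,k≥1} (r_{n,k}/n!) x^n u^k equals -(1/p)·log(1 - u + u(1-x)^p); equivalently, for all integers n,k ≥ 1, r_{n,k} equals n! times the coefficient of x^n u^k in the Taylor expansion of -(1/p)·log(1 - u + u(1-x)^p) at (x,u)=(0,0). -/
open Finset Filter Asymptotics

/-- The root-cluster weight recursion. -/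
noncomputable def clusterRec (p : ℝ) (φ : ℕ → ℝ) (r : ℕ → ℕ → ℝ) (b : ℕ → ℝ) : Prop :=
  (∀ m, b m = ∑ k ∈ Finset.Icc 1 m, r m k) ∧
  ∀ n k : ℕ, 1 ≤ n → 1 ≤ k →
    r n k =
      ∑ δ ∈ Finset.range n, ∑ s ∈ (Finset.range (δ + 1)).attach,
        (δ.choose s.1 : ℝ) * (φ δ / (δ.factorial : ℝ)) *
          ∑ f ∈ (Finset.Nat.antidiagonalTuple δ (n - 1)).filter (fun f => ∀ i, 1 ≤ f i),
            (((n - 1).factorial : ℝ) / ∏ i, ((f i).factorial : ℝ)) *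
              ∑ g ∈ (Finset.Nat.antidiagonalTuple s.1 (k - 1)).filter (fun g => ∀ i, 1 ≤ g i),
                p ^ s.1 * (1 - p) ^ (δ - s.1) *
                  (∏ i : Fin s.1,
                    r (f (Fin.castLE (Nat.lt_succ_iff.mp (Finset.mem_range.mp s.2)) i)) (g i)) *
                  ∏ j ∈ Finset.univ.filter (fun j : Fin δ => s.1 ≤ (j : ℕ)), b (f j)

/-- Partial Bell polynomials. -/
noncomputable def bellPartial (k j : ℕ) (x : ℕ → ℝ) : ℝ :=
  ∑ m ∈ (Fintype.piFinset (fun _ : Fin (k - j + 1) => Finset.range (k + 1))).filter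
      (fun m : Fin (k - j + 1) → ℕ => (∑ i : Fin (k - j + 1), ((i : ℕ) + 1) * m i) = k ∧ (∑ i, m i) = j),
    (k.factorial : ℝ) *
      ∏ i : Fin (k - j + 1), x ((i : ℕ) + 1) ^ m i /
        (((m i).factorial : ℝ) * (((i : ℕ) + 1).factorial : ℝ) ^ m i)


open PowerSeries in
lemma coeff_prod_tuple (d n : ℕ) (F : Fin d → PowerSeries ℝ) :
    ∑ f ∈ Finset.Nat.antidiagonalTuple d n, ∏ i, coeff (f i) (F i) = coeff n (∏ i, F i) := by
  classical
  rw [PowerSeries.coeff_prod]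
  refine Finset.sum_nbij' (fun f => Finsupp.equivFunOnFinite.symm f) (fun l => ⇑l) ?_ ?_ ?_ ?_ ?_
  · intro f hf
    rw [Finset.Nat.mem_antidiagonalTuple] at hf
    simp [Finset.mem_finsuppAntidiag, hf]
  · intro f hf
    rw [Finset.mem_finsuppAntidiag] at hf
    rw [Finset.Nat.mem_antidiagonalTuple]
    exact hf.1
  · intro f hf; rfl
  · intro f hf; ext; rfl
  · intro f hf; rfl

noncomputable def logS : PowerSeries ℝ := PowerSeries.mk fun n => 1 / (n : ℝ)

open PowerSeries in
lemma logS_deriv : (1 - X) * PowerSeries.derivative ℝ logS = 1 := by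
  have h : PowerSeries.derivative ℝ logS = PowerSeries.mk 1 := by
    ext n
    rw [coeff_derivative, logS, coeff_mk, coeff_mk]
    have : (n : ℝ) + 1 ≠ 0 := by positivity
    push_cast
    simp [this]
  rw [h, mul_comm]
  exact mk_one_mul_one_sub_eq_one ℝ

open PowerSeries in
lemma coeff_pow_zero {F : PowerSeries ℝ} (h : coeff 0 F = 0) {n t : ℕ} (hnt : n < t) (G : PowerSeries ℝ) :
    coeff n (F ^ t * G) = 0 := by
  have h1 : (X : PowerSeries ℝ) ∣ F := by
    rw [X_dvd_iff]; simpa using h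
  have h2 : (X : PowerSeries ℝ) ^ t ∣ F ^ t * G := (pow_dvd_pow_of_dvd h1 t).mul_right G
  exact X_pow_dvd_iff.mp h2 n hnt

open PowerSeries in
lemma coeff_one_sub_X_mul (G : PowerSeries ℝ) (n : ℕ) :
    coeff n ((1 - X) * derivative ℝ G) = (n + 1) * coeff (n+1) G - n * coeff n G := by
  rw [sub_mul, one_mul, map_sub, coeff_derivative]
  cases n with
  | zero => simp
  | succ m => rw [coeff_succ_X_mul, coeff_derivative]; push_cast; ring

noncomputable def expS (c : ℝ) (N : ℕ) : PowerSeries ℝ :=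
  ∑ t ∈ Finset.range N, (c ^ t / (t.factorial : ℝ)) • logS ^ t

open PowerSeries in
lemma expS_deriv (c : ℝ) (N : ℕ) :
    (1 - X) * derivative ℝ (expS c (N+1)) = c • expS c N := by
  unfold expS
  rw [Finset.sum_range_succ', map_add, map_sum]
  simp only [Derivation.map_smul, derivative_pow, pow_zero, derivative_one, smul_zero, add_zero]
  rw [Finset.mul_sum, Finset.smul_sum]
  refine Finset.sum_congr rfl fun t _ => ?_
  have : (1 - X) * ((c ^ (t+1) / ((t+1).factorial : ℝ)) • (((t+1 : ℕ) : PowerSeries ℝ) * logS ^ (t+1-1) * derivative ℝ logS))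
      = (c ^ (t+1) / ((t+1).factorial : ℝ)) • (((t+1 : ℕ) : PowerSeries ℝ) * logS ^ t * ((1 - X) * derivative ℝ logS)) := by
    rw [mul_smul_comm]; congr 1; simp only [Nat.add_sub_cancel]; ring
  rw [this, logS_deriv, mul_one, ← nsmul_eq_mul, ← Nat.cast_smul_eq_nsmul ℝ, smul_smul, smul_smul]
  congr 1
  rw [Nat.factorial_succ]
  have : (t.factorial : ℝ) ≠ 0 := by positivity
  have : (t : ℝ) + 1 ≠ 0 := by positivity
  push_cast
  field_simp
  ring

open PowerSeries in
lemma expS_coeff (c : ℝ) (G : PowerSeries ℝ) (h0 : coeff 0 G = 1)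
    (hG : (1 - X) * derivative ℝ G = c • G) (n : ℕ) :
    ∀ N, n < N → coeff n (expS c N) = coeff n G := by
  induction n with
  | zero =>
    intro N hN
    obtain ⟨N, rfl⟩ : ∃ M, N = M + 1 := ⟨N - 1, by omega⟩
    rw [h0, expS, Finset.sum_range_succ']
    simp [logS]
  | succ n ih =>
    intro N hN
    obtain ⟨N, rfl⟩ : ∃ M, N = M + 1 := ⟨N - 1, by omega⟩
    have e1 := congrArg (coeff n) (expS_deriv c N)
    have e2 := congrArg (coeff n) hG
    rw [coeff_one_sub_X_mul, coeff_smul] at e1 e2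
    rw [ih N (by omega), ih (N+1) (by omega)] at e1
    have : (n : ℝ) + 1 ≠ 0 := by positivity
    apply mul_left_cancel₀ this
    linarith

open PowerSeries in
lemma expS_one (N : ℕ) : coeff N (expS 1 (N+1)) = 1 := by
  rw [expS_coeff 1 (PowerSeries.mk 1) (by simp) _ N _ (by omega)]
  · simp
  · ext n
    rw [coeff_one_sub_X_mul]
    simp

section
variable {p : ℝ} {W : PowerSeries ℝ}
open PowerSeries

lemma expS_W (hp0 : p ≠ 0) (hW0 : coeff 0 W = 0)
    (hW : (1 - X) * derivative ℝ W = p • (1 - W)) (n N : ℕ) (h : n < N) :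
    coeff n (expS (1 - p) N) = coeff n (p⁻¹ • derivative ℝ W) := by
  apply expS_coeff (1 - p) _ _ _ n N h
  · have := congrArg (coeff 0) hW
    rw [coeff_one_sub_X_mul, coeff_smul, map_sub, hW0] at this
    rw [coeff_smul, coeff_derivative]
    simp at this ⊢
    rw [this]; field_simp
  · have := congrArg (derivative ℝ) hW
    rw [Derivation.leibniz] at this
    simp only [map_sub, Derivation.map_smul, derivative_one, derivative_X, smul_eq_mul] at this ⊢
    rw [mul_smul_comm, smul_comm]
    congr 1
    rw [sub_smul, one_smul]
    simp only [zero_sub, smul_neg] at this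
    linear_combination this

lemma W_b (hW0 : coeff 0 W = 0)
    (hW : (1 - X) * derivative ℝ W = p • (1 - W)) (m : ℕ) (hm : 1 ≤ m) :
    ∑ k ∈ Finset.Icc 1 m, coeff m (W ^ k) / k = p / m := by
  have h1 : derivative ℝ W * ∑ k ∈ Finset.range m, W ^ k = p • (PowerSeries.mk 1 * (1 - W ^ m)) := by
    have e := mk_one_mul_one_sub_eq_one ℝ
    have e2 := mul_neg_geom_sum W m
    calc _ = (PowerSeries.mk 1 * (1 - X)) * (derivative ℝ W * ∑ k ∈ Finset.range m, W ^ k) := by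
            rw [e, one_mul]
      _ = PowerSeries.mk 1 * (((1 - X) * derivative ℝ W) * ∑ k ∈ Finset.range m, W ^ k) := by ring
      _ = _ := by rw [hW, smul_mul_assoc, e2, mul_smul_comm]
  have h2 := congrArg (coeff (m-1)) h1
  have h3 : coeff (m-1) (PowerSeries.mk 1 * (1 - W ^ m)) = (1:ℝ) := by
    rw [mul_sub, map_sub, mul_one, mul_comm (PowerSeries.mk 1), coeff_pow_zero hW0 (by omega)]
    simp
  rw [coeff_smul, h3, smul_eq_mul, mul_one, Finset.mul_sum, map_sum] at h2
  have hm0 : (m : ℝ) ≠ 0 := by positivity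
  rw [eq_div_iff hm0, ← h2, Finset.sum_mul, ← Finset.Ico_add_one_right_eq_Icc,
    Finset.sum_Ico_eq_sum_range]
  simp only [Nat.add_sub_cancel]
  refine Finset.sum_congr rfl fun k _ => ?_
  obtain ⟨m, rfl⟩ : ∃ M, m = M + 1 := ⟨m - 1, by omega⟩
  have e : derivative ℝ (W ^ (1+k)) = ((1 + k : ℕ) : ℝ) • (derivative ℝ W * W ^ k) := by
    rw [derivative_pow, Nat.cast_smul_eq_nsmul, nsmul_eq_mul]
    simp only [Nat.add_sub_cancel_left]; ring
  have e3 := congrArg (coeff m) e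
  rw [coeff_derivative, coeff_smul, smul_eq_mul] at e3
  have : ((1 + k : ℕ) : ℝ) ≠ 0 := by positivity
  simp only [Nat.add_sub_cancel]
  push_cast at *
  field_simp
  exact e3

lemma term_eq (hp0 : p ≠ 0) (hW0 : coeff 0 W = 0) (n k s t : ℕ) :
    ∑ f ∈ (Finset.Nat.antidiagonalTuple (s+t) n).filter (fun f => ∀ i, 1 ≤ f i),
      ∑ g ∈ (Finset.Nat.antidiagonalTuple s k).filter (fun g => ∀ i, 1 ≤ g i),
        p ^ s * (1 - p) ^ t *
          (∏ i : Fin s, coeff (f (Fin.castAdd t i)) (W ^ (g i)) / (p * g i)) *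
          ∏ j : Fin t, (1 / (f (Fin.natAdd s j) : ℝ))
      = (1 - p) ^ t * coeff k (logS ^ s) * coeff n (W ^ k * logS ^ t) := by
  rw [Finset.sum_comm]
  have key : ∀ g ∈ (Finset.Nat.antidiagonalTuple s k).filter (fun g => ∀ i, 1 ≤ g i),
      ∑ f ∈ (Finset.Nat.antidiagonalTuple (s+t) n).filter (fun f => ∀ i, 1 ≤ f i),
        p ^ s * (1 - p) ^ t *
          (∏ i : Fin s, coeff (f (Fin.castAdd t i)) (W ^ (g i)) / (p * g i)) *
          ∏ j : Fin t, (1 / (f (Fin.natAdd s j) : ℝ))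
      = (1 - p) ^ t * coeff n (W ^ k * logS ^ t) * ∏ i, coeff (g i) logS := by
    intro g hg
    rw [Finset.mem_filter, Finset.Nat.mem_antidiagonalTuple] at hg
    obtain ⟨hgs, hg1⟩ := hg
    set F : Fin (s + t) → PowerSeries ℝ := Fin.append (fun i => W ^ (g i)) (fun _ => logS) with hF
    have hprod : ∏ i, F i = W ^ k * logS ^ t := by
      rw [Fin.prod_univ_add]
      simp [hF, Finset.prod_pow_eq_pow_sum, hgs]
    rw [← hprod, ← coeff_prod_tuple, Finset.mul_sum, Finset.sum_mul]
    rw [Finset.sum_filter_of_ne]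
    · refine Finset.sum_congr rfl fun f _ => ?_
      rw [Fin.prod_univ_add]
      simp only [hF, Fin.append_left, Fin.append_right, logS, coeff_mk]
      have : ∏ i : Fin s, coeff (f (Fin.castAdd t i)) (W ^ (g i)) / (p * g i)
        = (∏ i : Fin s, coeff (f (Fin.castAdd t i)) (W ^ (g i))) * (p⁻¹ ^ s * ∏ i, (1 / (g i : ℝ))) := by
        rw [← Fin.prod_const, ← Finset.prod_mul_distrib, ← Finset.prod_mul_distrib]
        refine Finset.prod_congr rfl fun i _ => ?_
        rw [div_eq_mul_inv, mul_inv, one_div]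
      rw [this, inv_pow]
      have : p ^ s ≠ 0 := pow_ne_zero _ hp0
      field_simp
    · intro f _ hne i
      by_contra hlt
      have hfi : f i = 0 := by omega
      apply hne
      induction i using Fin.addCases with
      | left i =>
        rw [Finset.prod_eq_zero (Finset.mem_univ i)]
        · simp
        · rw [hfi, ← mul_one (W ^ g i), coeff_pow_zero hW0 (hg1 i)]; simp
      | right i =>
        rw [mul_comm, Finset.prod_eq_zero (Finset.mem_univ i)]
        · simp
        · rw [hfi]; simp
  rw [Finset.sum_congr rfl key, ← Finset.mul_sum, Finset.sum_filter_of_ne, coeff_prod_tuple]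
  · simp; ring
  · intro g _ hne i
    by_contra hlt
    have hgi : g i = 0 := by omega
    apply hne
    rw [Finset.prod_eq_zero (Finset.mem_univ i)]
    rw [hgi]; simp [logS]

lemma total_sum (hp0 : p ≠ 0) (hW0 : coeff 0 W = 0)
    (hW : (1 - X) * derivative ℝ W = p • (1 - W)) (n k : ℕ) :
    ∑ δ ∈ Finset.range (n+1), ∑ s ∈ Finset.range (δ + 1),
      (1 / ((s.factorial : ℝ) * ((δ - s).factorial : ℝ))) * ((1 - p) ^ (δ - s) * coeff k (logS ^ s) * coeff n (W ^ k * logS ^ (δ - s)))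
      = (n + 1) * (coeff (n + 1) (W ^ (k + 1)) / (p * ((k + 1 : ℕ) : ℝ))) := by
  have hL0 : coeff 0 logS = 0 := by simp [logS]
  set T : ℕ → ℕ → ℝ := fun s t => (1 / ((s.factorial : ℝ) * (t.factorial : ℝ))) * ((1 - p) ^ t * coeff k (logS ^ s) * coeff n (W ^ k * logS ^ t)) with hT
  have hTs : ∀ s t, k < s → T s t = 0 := by
    intro s t h
    have := coeff_pow_zero hL0 h 1
    rw [mul_one] at this
    simp [hT, this]
  have hTt : ∀ s t, n < s + t → T s t = 0 := by
    intro s t h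
    by_cases hs : k < s
    · exact hTs s t hs
    have : coeff n (W ^ k * logS ^ t) = 0 := by
      have h1 : (X : PowerSeries ℝ) ∣ W := by rw [X_dvd_iff]; simpa using hW0
      have h2 : (X : PowerSeries ℝ) ∣ logS := by rw [X_dvd_iff]; simpa using hL0
      have h3 := mul_dvd_mul (pow_dvd_pow_of_dvd h1 k) (pow_dvd_pow_of_dvd h2 t)
      rw [← pow_add] at h3
      exact X_pow_dvd_iff.mp h3 n (by omega)
    simp [hT, this]
  have e1 : ∑ δ ∈ Finset.range (n+1), ∑ s ∈ Finset.range (δ + 1), T s (δ - s)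
      = ∑ s ∈ Finset.range (k+1), ∑ t ∈ Finset.range (n+1), T s t := by
    rw [Finset.sum_sigma', ← Finset.sum_product']
    refine Finset.sum_bij_ne_zero (fun a _ _ => (a.2, a.1 - a.2)) ?_ ?_ ?_ ?_
    · rintro ⟨d, s⟩ h hne
      simp at h hne ⊢
      have : ¬ k < s := fun hk => hne (hTs _ _ hk)
      omega
    · rintro ⟨d, s⟩ h hne ⟨d', s'⟩ h' hne' heq
      simp at h h' heq ⊢
      omega
    · rintro ⟨s, t⟩ h hne
      have : ¬ n < s + t := fun hk => hne (hTt _ _ hk)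
      refine ⟨⟨s + t, s⟩, ?_, ?_, ?_⟩
      · simp; omega
      · simpa using hne
      · simp
    · rintro ⟨d, s⟩ h hne
      rfl
  have e2 : ∑ s ∈ Finset.range (k+1), ∑ t ∈ Finset.range (n+1), T s t
      = coeff k (expS 1 (k+1)) * coeff n (W ^ k * expS (1 - p) (n+1)) := by
    simp only [expS, map_sum, Finset.mul_sum, Finset.sum_mul, mul_smul_comm, coeff_smul, Finset.smul_sum]
    rw [Finset.sum_comm]
    refine Finset.sum_congr rfl fun t _ => Finset.sum_congr rfl fun s _ => ?_
    simp only [hT, smul_eq_mul, one_pow]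
    have : (s.factorial : ℝ) ≠ 0 := by positivity
    have : (t.factorial : ℝ) ≠ 0 := by positivity
    field_simp
  have e3 : coeff n (W ^ k * expS (1 - p) (n+1)) = coeff n (W ^ k * (p⁻¹ • derivative ℝ W)) := by
    rw [coeff_mul, coeff_mul]
    refine Finset.sum_congr rfl fun x hx => ?_
    rw [expS_W hp0 hW0 hW]
    have : x.1 + x.2 = n := by simpa using hx
    omega
  have e : derivative ℝ (W ^ (k+1)) = ((k + 1 : ℕ) : ℝ) • (W ^ k * derivative ℝ W) := by
    rw [derivative_pow, Nat.cast_smul_eq_nsmul, nsmul_eq_mul]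
    simp only [Nat.add_sub_cancel]; ring
  have e4 := congrArg (coeff n) e
  rw [coeff_derivative, coeff_smul, smul_eq_mul] at e4
  change ∑ δ ∈ Finset.range (n+1), ∑ s ∈ Finset.range (δ + 1), T s (δ - s) = _
  rw [e1, e2, e3, expS_one, mul_smul_comm, coeff_smul, smul_eq_mul]
  have : ((k + 1 : ℕ) : ℝ) ≠ 0 := by positivity
  field_simp
  linarith

lemma r_eq (hp0 : p ≠ 0) (hW0 : coeff 0 W = 0)
    (hW : (1 - X) * derivative ℝ W = p • (1 - W))
    (r : ℕ → ℕ → ℝ) (b : ℕ → ℝ) (hrec : clusterRec p (fun _ => 1) r b) :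
    ∀ n k : ℕ, 1 ≤ n → 1 ≤ k → r n k = (n.factorial : ℝ) * (coeff n (W ^ k) / (p * (k : ℝ))) := by
  obtain ⟨hb, hr⟩ := hrec
  intro n
  induction n using Nat.strong_induction_on with
  | _ n ih =>
  intro k hn hk
  have hbm : ∀ m, 1 ≤ m → m < n → b m = (m.factorial : ℝ) * (1 / (m : ℝ)) := by
    intro m hm hmn
    rw [hb m]
    have h := W_b hW0 hW m hm
    calc _ = ∑ k ∈ Finset.Icc 1 m, ((m.factorial : ℝ) / p) * (coeff m (W ^ k) / k) := by
          refine Finset.sum_congr rfl fun j hj => ?_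
          rw [Finset.mem_Icc] at hj
          rw [ih m hmn j hm hj.1]
          field_simp
      _ = _ := by
          rw [← Finset.mul_sum, h]; field_simp
  rw [hr n k hn hk]
  obtain ⟨n, rfl⟩ : ∃ M, n = M + 1 := ⟨n - 1, by omega⟩
  obtain ⟨k, rfl⟩ : ∃ M, k = M + 1 := ⟨k - 1, by omega⟩
  simp only [Nat.add_sub_cancel]
  have ht := total_sum hp0 hW0 hW n k
  have : (((n+1).factorial : ℕ) : ℝ) = (n.factorial : ℝ) * (n + 1) := by
    rw [Nat.factorial_succ]; push_cast; ring
  rw [this, mul_assoc, ← ht, Finset.mul_sum]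
  refine Finset.sum_congr rfl fun δ hδ => ?_
  rw [← Finset.sum_attach (Finset.range (δ+1)), Finset.mul_sum]
  refine Finset.sum_congr rfl fun s _ => ?_
  obtain ⟨s, hs⟩ := s
  obtain ⟨t, rfl⟩ : ∃ t, δ = s + t := ⟨δ - s, by have := Finset.mem_range.mp hs; omega⟩
  simp only [Nat.add_sub_cancel_left]
  rw [← term_eq hp0 hW0 n k s t]
  have hch : ((s+t).choose s : ℝ) * (1 / ((s+t).factorial : ℝ)) = 1 / ((s.factorial : ℝ) * (t.factorial : ℝ)) := by
    have := Nat.add_choose_mul_factorial_mul_factorial s t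
    rw [← Nat.choose_symm_add] at this
    have h2 : ((s+t).choose s : ℝ) * (s.factorial : ℝ) * (t.factorial : ℝ) = ((s+t).factorial : ℝ) := by
      exact_mod_cast this
    have : (s.factorial : ℝ) ≠ 0 := by positivity
    have : (t.factorial : ℝ) ≠ 0 := by positivity
    have : ((s+t).factorial : ℝ) ≠ 0 := by positivity
    field_simp
    linarith
  rw [hch, mul_left_comm]
  congr 1
  rw [Finset.mul_sum]
  refine Finset.sum_congr rfl fun f hf => ?_
  rw [Finset.mem_filter, Finset.Nat.mem_antidiagonalTuple] at hf
  obtain ⟨hfs, hf1⟩ := hf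
  have hfn : ∀ i, f i < n + 1 := by
    intro i
    have := Finset.single_le_sum (f := f) (fun i _ => Nat.zero_le _) (Finset.mem_univ i)
    omega
  rw [div_mul_eq_mul_div, mul_div_assoc]
  congr 1
  rw [Finset.sum_div]
  refine Finset.sum_congr rfl fun g hg => ?_
  rw [Finset.mem_filter, Finset.Nat.mem_antidiagonalTuple] at hg
  obtain ⟨hgs, hg1⟩ := hg
  have e1 : ∏ j ∈ Finset.univ.filter (fun j : Fin (s+t) => s ≤ (j : ℕ)), b (f j)
      = (∏ j : Fin t, ((f (Fin.natAdd s j)).factorial : ℝ)) * ∏ j : Fin t, (1 / (f (Fin.natAdd s j) : ℝ)) := by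
    rw [Finset.prod_filter, Fin.prod_univ_add, ← Finset.prod_mul_distrib]
    have : ∏ i : Fin s, (if s ≤ ((Fin.castAdd t i : Fin (s+t)) : ℕ) then b (f (Fin.castAdd t i)) else 1) = 1 := by
      apply Finset.prod_eq_one
      intro i _
      simp
    rw [this, one_mul]
    refine Finset.prod_congr rfl fun j _ => ?_
    rw [if_pos (by simp), hbm _ (hf1 _) (hfn _)]
  have e2 : ∏ i : Fin s, r (f (Fin.castLE (Nat.lt_succ_iff.mp (Finset.mem_range.mp hs)) i)) (g i)
      = (∏ j : Fin s, ((f (Fin.castAdd t j)).factorial : ℝ)) * ∏ i : Fin s, coeff (f (Fin.castAdd t i)) (W ^ (g i)) / (p * g i) := by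
    rw [← Finset.prod_mul_distrib]
    refine Finset.prod_congr rfl fun j _ => ?_
    exact ih _ (hfn _) _ (hf1 _) (hg1 j)
  rw [e1, e2, Fin.prod_univ_add]
  have h1 : (∏ j : Fin s, ((f (Fin.castAdd t j)).factorial : ℝ)) ≠ 0 := by positivity
  have h2 : (∏ j : Fin t, ((f (Fin.natAdd s j)).factorial : ℝ)) ≠ 0 := by positivity
  rw [div_eq_iff (mul_ne_zero h1 h2)]
  ring

end

noncomputable def taylorS (f : ℝ → ℝ) : PowerSeries ℝ :=
  PowerSeries.mk fun n => iteratedDeriv n f 0 / (n.factorial : ℝ)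

section
open PowerSeries

lemma taylorS_mul {f g : ℝ → ℝ} (hf : ∀ n : ℕ, ContDiffAt ℝ n f 0) (hg : ∀ n : ℕ, ContDiffAt ℝ n g 0) :
    taylorS (f * g) = taylorS f * taylorS g := by
  ext n
  rw [coeff_mul, Finset.Nat.sum_antidiagonal_eq_sum_range_succ_mk]
  simp only [taylorS, coeff_mk]
  rw [iteratedDeriv_mul (hf n) (hg n), Finset.sum_div]
  refine Finset.sum_congr rfl fun i hi => ?_
  have hi : i ≤ n := by have := Finset.mem_range.mp hi; omega
  rw [Nat.cast_choose ℝ hi]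
  have : (n.factorial : ℝ) ≠ 0 := by positivity
  have : (i.factorial : ℝ) ≠ 0 := by positivity
  have : ((n - i).factorial : ℝ) ≠ 0 := by positivity
  field_simp

lemma taylorS_congr {f g : ℝ → ℝ} (h : f =ᶠ[nhds 0] g) : taylorS f = taylorS g := by
  ext n
  simp only [taylorS, coeff_mk, h.iteratedDeriv_eq n]

lemma taylorS_deriv (f : ℝ → ℝ) : taylorS (deriv f) = derivative ℝ (taylorS f) := by
  ext n
  rw [coeff_derivative]
  simp only [taylorS, coeff_mk, iteratedDeriv_succ', Nat.factorial_succ]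
  push_cast
  have : (n.factorial : ℝ) ≠ 0 := by positivity
  field_simp

lemma taylorS_const (c : ℝ) : taylorS (fun _ => c) = c • 1 := by
  ext n
  simp only [taylorS, coeff_mk, iteratedDeriv_const, coeff_smul, coeff_one]
  split_ifs with h <;> simp [h]

lemma taylorS_lin (a c : ℝ) : taylorS (fun x => a - c * x) = a • 1 - c • X := by
  ext n
  have hd : deriv (fun x : ℝ => a - c * x) = fun _ => -c := by
    funext x
    simp
  cases n with
  | zero => simp [taylorS]
  | succ n =>
    simp only [taylorS, coeff_mk, iteratedDeriv_succ', hd, iteratedDeriv_const]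
    cases n with
    | zero => simp [coeff_one]
    | succ n => simp [coeff_one, coeff_X]

lemma taylorS_pow {f : ℝ → ℝ} (hf : ∀ n : ℕ, ContDiffAt ℝ n f 0) (k : ℕ) :
    taylorS (f ^ k) = taylorS f ^ k := by
  induction k with
  | zero => 
    have := taylorS_const 1
    rw [one_smul] at this
    rw [pow_zero, pow_zero]; exact this
  | succ k ih =>
    have h : ∀ n : ℕ, ContDiffAt ℝ n (f ^ k) 0 := fun n => (hf n).pow k
    rw [pow_succ, taylorS_mul h hf, ih, pow_succ]

lemma contDiff_deriv {f : ℝ → ℝ} (hf : ∀ n : ℕ, ContDiffAt ℝ n f 0) (n : ℕ) :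
    ContDiffAt ℝ n (deriv f) 0 := by
  have h := (hf (n+1)).fderiv_right (m := n) (by norm_cast)
  exact h.clm_apply contDiffAt_const

lemma W_ode (p : ℝ) :
    let w : ℝ → ℝ := fun x => 1 - (1 - x) ^ p
    (∀ n : ℕ, ContDiffAt ℝ n w 0) ∧ coeff 0 (taylorS w) = 0 ∧
    (1 - X) * derivative ℝ (taylorS w) = p • (1 - taylorS w) := by
  intro w
  have hc : ∀ n : ℕ, ContDiffAt ℝ n w 0 := by
    intro n
    refine contDiffAt_const.sub (ContDiffAt.rpow_const_of_ne (contDiffAt_const.sub contDiffAt_id) (by simp))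
  refine ⟨hc, by simp [taylorS, w], ?_⟩
  have hlt : ∀ᶠ x : ℝ in nhds 0, x < 1 := eventually_lt_nhds one_pos
  have h1 : (fun x : ℝ => 1 - 1 * x) * deriv w =ᶠ[nhds 0] (fun _ => p) * (1 - w) := by
    filter_upwards [hlt] with x hx
    have hd : HasDerivAt w (-((-1) * p * (1 - x) ^ (p - 1))) x := by
      have := (((hasDerivAt_id x).const_sub 1).rpow_const (p := p) (Or.inl (by simp; linarith))).const_sub 1
      simpa using this
    simp only [Pi.mul_apply, Pi.sub_apply, Pi.one_apply, hd.deriv, w]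
    have : (1 - x) ^ p = (1 - x) ^ (p - 1) * (1 - x) := by
      rw [← Real.rpow_add_one (by linarith)]; congr 1; ring
    rw [sub_sub_cancel, this]; ring
  have hs : taylorS (1 - w) = 1 - taylorS w := by
    ext n
    simp only [taylorS, coeff_mk, map_sub]
    have h1c : ContDiffAt ℝ n (1 : ℝ → ℝ) 0 := contDiffAt_const
    rw [iteratedDeriv_sub h1c (hc n), sub_div]
    have := congrArg (coeff n) (taylorS_const 1)
    simp only [taylorS, coeff_mk, one_smul] at this
    rw [← this]; rfl
  have hc1 : ∀ n : ℕ, ContDiffAt ℝ n (1 - w) 0 := fun n => contDiffAt_const.sub (hc n)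
  have h2 := taylorS_congr h1
  rw [taylorS_mul (fun n => by fun_prop) (contDiff_deriv hc), taylorS_deriv,
    taylorS_mul (fun n => contDiffAt_const) hc1, taylorS_lin, taylorS_const, hs] at h2
  simpa using h2

lemma inner_deriv (p y : ℝ) (k : ℕ) :
    iteratedDeriv (k+1) (fun u : ℝ => -(1 / p) * Real.log (1 - u + u * y)) 0
      = (1 / p) * (k.factorial : ℝ) * (1 - y) ^ (k + 1) := by
  set w := 1 - y with hw
  set g : ℝ → ℝ := fun u => Real.log (1 - w * u) with hg
  have hfun : (fun u : ℝ => -(1 / p) * Real.log (1 - u + u * y)) = fun u => -(1 / p) * g u := by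
    funext u
    simp only [hg, hw]; congr 2; ring
  have hc : ∀ n : ℕ, ContDiffAt ℝ n g 0 := by
    intro n
    exact ContDiffAt.log (by fun_prop) (by simp)
  have hpos : ∀ᶠ u : ℝ in nhds 0, 1 - w * u ≠ 0 := by
    have : ContinuousAt (fun u : ℝ => 1 - w * u) 0 := by fun_prop
    exact this.eventually_ne (by simp)
  have h1 : (fun u : ℝ => 1 - w * u) * deriv g =ᶠ[nhds 0] fun _ => -w := by
    filter_upwards [hpos] with u hu
    have hd : HasDerivAt g (-w / (1 - w * u)) u := by
      have := (((hasDerivAt_id u).const_mul w).const_sub 1).log (by simpa using hu)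
      simpa using this
    simp only [Pi.mul_apply, hd.deriv]
    field_simp
  have h2 := taylorS_congr h1
  rw [taylorS_mul (fun n => by fun_prop) (contDiff_deriv hc), taylorS_lin, taylorS_const] at h2
  have h3 : ∀ k, coeff k (taylorS (deriv g)) = - w ^ (k+1) := by
    intro k
    have h4 := congrArg (coeff k) h2
    rw [sub_mul, smul_mul_assoc, smul_mul_assoc, map_sub, coeff_smul, coeff_smul, one_mul, coeff_smul] at h4
    induction k with
    | zero => simpa using h4
    | succ k ih =>
      rw [coeff_succ_X_mul, ih] at h4
      · simp [coeff_one] at h4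
        rw [pow_succ]; linarith
      · have h4 := congrArg (coeff k) h2
        rwa [sub_mul, smul_mul_assoc, smul_mul_assoc, map_sub, coeff_smul, coeff_smul, one_mul, coeff_smul] at h4
  have h5 := h3 k
  rw [taylorS, coeff_mk, div_eq_iff (by positivity)] at h5
  rw [hfun, iteratedDeriv_const_mul_field, iteratedDeriv_succ', h5]
  ring

end

/-- for random recursive trees (`φ(δ) = 1`), the root-cluster weights
`r n k` are `n!` times the Taylor coefficients of `-(1/p) log(1 - u + u (1-x)^p)`
at the origin. -/
theorem stmt0 (p : ℝ) (hp0 : 0 < p) (hp1 : p < 1)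
    (r : ℕ → ℕ → ℝ) (b : ℕ → ℝ)
    (hrec : clusterRec p (fun _ => 1) r b) :
    ∀ n k : ℕ, 1 ≤ n → 1 ≤ k →
      r n k = (n.factorial : ℝ) *
        ((1 / ((n.factorial : ℝ) * (k.factorial : ℝ))) *
          iteratedDeriv n
            (fun x : ℝ => iteratedDeriv k
              (fun u : ℝ => -(1 / p) * Real.log (1 - u + u * (1 - x) ^ p)) 0) 0) := by
  intro n k hn hk
  obtain ⟨hc, h0, hode⟩ := W_ode p
  rw [r_eq hp0.ne' h0 hode r b hrec n k hn hk, ← taylorS_pow hc]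
  obtain ⟨k, rfl⟩ : ∃ M, k = M + 1 := ⟨k - 1, by omega⟩
  simp only [inner_deriv]
  simp only [iteratedDeriv_const_mul_field, taylorS, PowerSeries.coeff_mk]
  have hpow : (fun x : ℝ => 1 - (1 - x) ^ p) ^ (k+1) = fun x : ℝ => (1 - (1 - x) ^ p) ^ (k+1) := by
    funext x; simp
  rw [hpow, Nat.factorial_succ]
  push_cast
  have : (n.factorial : ℝ) ≠ 0 := by positivity
  have : (k.factorial : ℝ) ≠ 0 := by positivity
  field_simp
end

section
/- Let 0<p<1 and let r_{n,k} be the root-cluster weights for random recursive trees (φ(δ)=1 for all δ). Then for every integer k ≥ 1, the normalized k-th moment of the root-cluster size satisfies lim_{n→∞} m_k(n)/n^{pk} = k!/Γ(pk+1); that is, the root-cluster size divided by n^p converges in moments to the Mittag-Leffler distribution with parameter p. -/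
open Finset Filter Asymptotics

lemma aux_sum_tuple_succ {M : Type*} [AddCommMonoid M] (s n : ℕ) (F : (Fin (s + 1) → ℕ) → M) :
    ∑ f ∈ Finset.Nat.antidiagonalTuple (s + 1) n, F f =
      ∑ ij ∈ Finset.HasAntidiagonal.antidiagonal n, ∑ f ∈ Finset.Nat.antidiagonalTuple s ij.2,
        F (Fin.cons ij.1 f) := by
  rw [Finset.sum_sigma']
  refine Finset.sum_bij' (fun f _ => ⟨(f 0, ∑ i, f (Fin.succ i)), Fin.tail f⟩)
    (fun x _ => Fin.cons x.1.1 x.2) ?_ ?_ ?_ ?_ ?_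
  · intro f hf
    rw [Finset.Nat.mem_antidiagonalTuple, Fin.sum_univ_succ] at hf
    simp [Finset.Nat.mem_antidiagonalTuple, hf, Fin.tail]
  · rintro ⟨⟨i, j⟩, f⟩ hf
    simp [Finset.Nat.mem_antidiagonalTuple] at hf ⊢
    simp [Fin.sum_univ_succ, hf]
  · intro f hf
    simp
  · rintro ⟨⟨i, j⟩, f⟩ hf
    simp [Finset.Nat.mem_antidiagonalTuple] at hf ⊢
    exact hf.2
  · intro f hf
    simp

lemma aux_coeff_prod_ps {R : Type*} [CommRing R] (s n : ℕ) (F : Fin s → PowerSeries R) :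
    PowerSeries.coeff n (∏ i, F i) =
      ∑ f ∈ Finset.Nat.antidiagonalTuple s n, ∏ i, PowerSeries.coeff (f i) (F i) := by
  induction s generalizing n with
  | zero => cases n <;> simp [PowerSeries.coeff_one]
  | succ s ih =>
    rw [aux_sum_tuple_succ, Fin.prod_univ_succ, PowerSeries.coeff_mul]
    refine Finset.sum_congr rfl fun ij _ => ?_
    rw [ih, Finset.mul_sum]
    refine Finset.sum_congr rfl fun f _ => ?_
    rw [Fin.prod_univ_succ]; simp

lemma aux_coeff_prod_poly {R : Type*} [CommRing R] (s n : ℕ) (F : Fin s → Polynomial R) :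
    (∏ i, F i).coeff n =
      ∑ f ∈ Finset.Nat.antidiagonalTuple s n, ∏ i, (F i).coeff (f i) := by
  induction s generalizing n with
  | zero => cases n <;> simp [Polynomial.coeff_one]
  | succ s ih =>
    rw [aux_sum_tuple_succ, Fin.prod_univ_succ, Polynomial.coeff_mul]
    refine Finset.sum_congr rfl fun ij _ => ?_
    rw [ih, Finset.mul_sum]
    refine Finset.sum_congr rfl fun f _ => ?_
    rw [Fin.prod_univ_succ]; simp

lemma aux_prod_split {M : Type*} [CommMonoid M] (δ s : ℕ) (h : s ≤ δ) (A B : Fin δ → M) :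
    (∏ j : Fin δ, if (j : ℕ) < s then A j else B j) =
      (∏ i : Fin s, A (Fin.castLE h i)) *
        ∏ j ∈ Finset.univ.filter (fun j : Fin δ => s ≤ (j : ℕ)), B j := by
  rw [Finset.prod_ite]
  congr 1
  · symm
    refine Finset.prod_bij (fun i _ => Fin.castLE h i) ?_ ?_ ?_ ?_
    · intro i _; simp
    · intro i _ j _ hij; simpa using hij
    · intro j hj; simp at hj; exact ⟨⟨j, hj⟩, by simp, by ext; simp⟩
    · intro i _; rfl
  · refine Finset.prod_congr ?_ fun _ _ => rfl
    ext j; simp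

/-- support -/
lemma aux_support (p : ℝ) (r : ℕ → ℕ → ℝ) (b : ℕ → ℝ)
    (hrec : clusterRec p (fun _ => 1) r b) :
    ∀ n k : ℕ, 1 ≤ n → n < k → r n k = 0 := by
  intro n
  induction n using Nat.strong_induction_on with
  | _ n ih =>
  intro k hn hk
  rw [hrec.2 n k hn (by omega)]
  refine Finset.sum_eq_zero fun δ hδ => Finset.sum_eq_zero fun s hs => ?_
  refine mul_eq_zero_of_right _ (Finset.sum_eq_zero fun f hf => ?_)
  refine mul_eq_zero_of_right _ (Finset.sum_eq_zero fun g hg => ?_)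
  refine mul_eq_zero_of_left (mul_eq_zero_of_right _ ?_) _
  have hsδ : s.1 ≤ δ := Nat.lt_succ_iff.mp (Finset.mem_range.mp s.2)
  simp only [Finset.mem_filter, Finset.Nat.mem_antidiagonalTuple] at hf hg
  have hle : ∑ i : Fin s.1, f (Fin.castLE hsδ i) ≤ n - 1 := by
    have := aux_prod_split (M := Multiplicative ℕ) δ s.1 hsδ
      (fun j => Multiplicative.ofAdd (f j)) (fun j => Multiplicative.ofAdd (f j))
    simp only [ite_self] at this
    have h2 : ∑ j, f j = ∑ i : Fin s.1, f (Fin.castLE hsδ i) +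
      ∑ j ∈ Finset.univ.filter (fun j : Fin δ => s.1 ≤ (j : ℕ)), f j := this
    omega
  have : ∃ i ∈ Finset.univ, f (Fin.castLE hsδ i) < g i := by
    apply Finset.exists_lt_of_sum_lt
    omega
  obtain ⟨i, -, hi⟩ := this
  refine Finset.prod_eq_zero (Finset.mem_univ i) (ih _ ?_ _ (hf.2 _) hi)
  have := Finset.single_le_sum (f := f) (fun _ _ => Nat.zero_le _) (Finset.mem_univ (Fin.castLE hsδ i))
  omega

/-- the polynomials -/
noncomputable def auxP (r : ℕ → ℕ → ℝ) (n : ℕ) : Polynomial ℝ :=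
  ∑ k ∈ Finset.Icc 1 n, Polynomial.monomial k (r n k)

lemma auxP_coeff (p : ℝ) (r : ℕ → ℕ → ℝ) (b : ℕ → ℝ)
    (hrec : clusterRec p (fun _ => 1) r b) (n k : ℕ) (hn : 1 ≤ n) (hk : 1 ≤ k) :
    (auxP r n).coeff k = r n k := by
  simp only [auxP, Polynomial.finsetSum_coeff, Polynomial.coeff_monomial]
  rw [Finset.sum_ite_eq']
  split_ifs with h
  · rfl
  · rw [aux_support p r b hrec n k hn]
    simp at h; omega

lemma auxP_coeff_zero (r : ℕ → ℕ → ℝ) (n : ℕ) : (auxP r n).coeff 0 = 0 := by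
  simp only [auxP, Polynomial.finsetSum_coeff, Polynomial.coeff_monomial]
  refine Finset.sum_eq_zero fun k hk => ?_
  simp at hk
  rw [if_neg (by omega)]

noncomputable def auxR (r : ℕ → ℕ → ℝ) : PowerSeries (Polynomial ℝ) :=
  PowerSeries.mk fun n => Polynomial.C ((n.factorial : ℝ)⁻¹) * auxP r n

noncomputable def auxB (b : ℕ → ℝ) : PowerSeries ℝ :=
  PowerSeries.mk fun n => (n.factorial : ℝ)⁻¹ * b n

noncomputable def auxS (p : ℝ) (r : ℕ → ℕ → ℝ) (b : ℕ → ℝ) : PowerSeries (Polynomial ℝ) :=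
  PowerSeries.C (Polynomial.C p) * auxR r +
    PowerSeries.C (Polynomial.C (1 - p)) * PowerSeries.map Polynomial.C (auxB b)

lemma aux_inner (p : ℝ) (r : ℕ → ℕ → ℝ) (b : ℕ → ℝ)
    (hrec : clusterRec p (fun _ => 1) r b) (n k δ s : ℕ) (hs : s ≤ δ) :
    (PowerSeries.coeff n
      (auxR r ^ s * PowerSeries.map Polynomial.C (auxB b) ^ (δ - s))).coeff k =
    ∑ f ∈ (Finset.Nat.antidiagonalTuple δ n).filter (fun f => ∀ i, 1 ≤ f i),
      (1 / ∏ i, ((f i).factorial : ℝ)) *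
        ∑ g ∈ (Finset.Nat.antidiagonalTuple s k).filter (fun g => ∀ i, 1 ≤ g i),
            (∏ i : Fin s, r (f (Fin.castLE hs i)) (g i)) *
            ∏ j ∈ Finset.univ.filter (fun j : Fin δ => s ≤ (j : ℕ)), b (f j) := by
  have hb0 : b 0 = 0 := by rw [hrec.1]; simp
  have hP0 : auxP r 0 = 0 := by simp [auxP]
  have e : auxR r ^ s * PowerSeries.map Polynomial.C (auxB b) ^ (δ - s) =
      ∏ j : Fin δ, if (j : ℕ) < s then auxR r else PowerSeries.map Polynomial.C (auxB b) := by
    rw [aux_prod_split δ s hs (fun _ => auxR r) (fun _ => PowerSeries.map Polynomial.C (auxB b))]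
    simp only [Finset.prod_const, Finset.card_univ, Fintype.card_fin]
    congr 2
    have h1 := aux_prod_split (M := Multiplicative ℕ) δ s hs
      (fun j => Multiplicative.ofAdd 1) (fun j => Multiplicative.ofAdd 1)
    simp only [ite_self] at h1
    have h2 : ∑ j : Fin δ, 1 = ∑ i : Fin s, 1 +
      ∑ j ∈ Finset.univ.filter (fun j : Fin δ => s ≤ (j : ℕ)), 1 := h1
    simp only [Finset.sum_const, Finset.card_univ, Fintype.card_fin, smul_eq_mul, mul_one] at h2
    omega
  rw [e, aux_coeff_prod_ps, Polynomial.finsetSum_coeff]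
  have hterm : ∀ f : Fin δ → ℕ,
      (∏ j, PowerSeries.coeff (f j) (if (j : ℕ) < s then auxR r else
        PowerSeries.map Polynomial.C (auxB b))) =
      Polynomial.C (1 / ∏ i, ((f i).factorial : ℝ)) *
        ((∏ i : Fin s, auxP r (f (Fin.castLE hs i))) *
         Polynomial.C (∏ j ∈ Finset.univ.filter (fun j : Fin δ => s ≤ (j : ℕ)), b (f j))) := by
    intro f
    have : ∀ j : Fin δ, PowerSeries.coeff (f j) (if (j : ℕ) < s then auxR r else
        PowerSeries.map Polynomial.C (auxB b)) =
        Polynomial.C (((f j).factorial : ℝ)⁻¹) *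
          (if (j : ℕ) < s then auxP r (f j) else Polynomial.C (b (f j))) := by
      intro j
      split_ifs
      · simp [auxR]
      · simp [auxB]
    rw [Finset.prod_congr rfl fun j _ => this j, Finset.prod_mul_distrib,
      aux_prod_split δ s hs (fun j => auxP r (f j)) (fun j => Polynomial.C (b (f j)))]
    rw [← map_prod, ← map_prod, Finset.prod_inv_distrib, one_div]
  rw [← Finset.sum_filter_of_ne (p := fun f : Fin δ → ℕ => ∀ i, 1 ≤ f i)]
  · refine Finset.sum_congr rfl fun f hf => ?_
    have hf1 : ∀ i, 1 ≤ f i := (Finset.mem_filter.mp hf).2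
    rw [hterm f, Polynomial.coeff_C_mul, Polynomial.coeff_mul_C, ← Finset.sum_mul]
    congr 2
    rw [aux_coeff_prod_poly, ← Finset.sum_filter_of_ne (p := fun g : Fin s → ℕ => ∀ i, 1 ≤ g i)]
    · refine Finset.sum_congr rfl fun g hg => Finset.prod_congr rfl fun i _ => ?_
      exact auxP_coeff p r b hrec _ _ (hf1 _) ((Finset.mem_filter.mp hg).2 i)
    · intro g _ hne i
      by_contra hi
      refine hne (Finset.prod_eq_zero (Finset.mem_univ i) ?_)
      rw [show g i = 0 by omega, auxP_coeff_zero]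
  · intro f _ hne i
    by_contra hi
    have hi0 : f i = 0 := by omega
    refine hne ?_
    rw [Finset.prod_eq_zero (Finset.mem_univ i)]
    · simp
    · rw [hi0]
      split_ifs
      · simp [auxR, hP0]
      · simp [auxB, hb0]

lemma aux_binom {R : Type*} [CommRing R] (c : ℝ →+* R) (p : ℝ) (A B : PowerSeries R) (n δ : ℕ) :
    PowerSeries.coeff n ((PowerSeries.C (c p) * A + PowerSeries.C (c (1 - p)) * B) ^ δ) =
      ∑ s ∈ Finset.range (δ + 1), c ((δ.choose s : ℝ) * (p ^ s * (1 - p) ^ (δ - s))) *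
        PowerSeries.coeff n (A ^ s * B ^ (δ - s)) := by
  rw [add_pow, map_sum]
  refine Finset.sum_congr rfl fun s _ => ?_
  rw [← PowerSeries.coeff_C_mul]
  congr 1
  simp only [mul_pow, map_mul, map_pow, map_natCast]
  ring

lemma aux_ode1 (p : ℝ) (r : ℕ → ℕ → ℝ) (b : ℕ → ℝ)
    (hrec : clusterRec p (fun _ => 1) r b) (n : ℕ) :
    PowerSeries.coeff n (PowerSeries.derivative (Polynomial ℝ) (auxR r)) =
      Polynomial.X * ∑ δ ∈ Finset.range (n + 1),
        Polynomial.C ((δ.factorial : ℝ)⁻¹) * PowerSeries.coeff n (auxS p r b ^ δ) := by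
  have hS : ∀ δ, PowerSeries.coeff n (auxS p r b ^ δ) =
      ∑ s ∈ Finset.range (δ + 1), Polynomial.C ((δ.choose s : ℝ) * (p ^ s * (1 - p) ^ (δ - s))) *
        PowerSeries.coeff n
          (auxR r ^ s * PowerSeries.map Polynomial.C (auxB b) ^ (δ - s)) := by
    intro δ
    exact aux_binom Polynomial.C p _ _ n δ
  have hL : PowerSeries.coeff n (PowerSeries.derivative (Polynomial ℝ) (auxR r)) =
      Polynomial.C ((n.factorial : ℝ)⁻¹) * auxP r (n + 1) := by
    rw [PowerSeries.coeff_derivative, auxR, PowerSeries.coeff_mk]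
    have : ((n : Polynomial ℝ) + 1) = Polynomial.C ((n : ℝ) + 1) := by simp
    rw [this, mul_right_comm, ← Polynomial.C_mul]
    congr 2
    rw [Nat.factorial_succ]
    push_cast
    have : (n.factorial : ℝ) ≠ 0 := by positivity
    have : (n : ℝ) + 1 ≠ 0 := by positivity
    field_simp
  rw [hL]
  ext k
  rw [Polynomial.coeff_C_mul]
  cases k with
  | zero => simp [auxP_coeff_zero]
  | succ k =>
    rw [auxP_coeff p r b hrec _ _ (by omega) (by omega), Polynomial.coeff_X_mul,
      hrec.2 _ _ (by omega) (by omega), Polynomial.finsetSum_coeff, Finset.mul_sum]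
    refine Finset.sum_congr rfl fun δ _ => ?_
    rw [hS, Polynomial.coeff_C_mul, Polynomial.finsetSum_coeff, Finset.mul_sum, Finset.mul_sum,
      ← Finset.sum_attach (Finset.range (δ + 1))]
    refine Finset.sum_congr rfl fun s _ => ?_
    rw [Polynomial.coeff_C_mul, aux_inner p r b hrec n k δ s.1
      (Nat.lt_succ_iff.mp (Finset.mem_range.mp s.2))]
    simp only [Nat.add_sub_cancel, Finset.mul_sum]
    refine Finset.sum_congr rfl fun f _ => ?_
    refine Finset.sum_congr rfl fun g _ => ?_
    have : (n.factorial : ℝ) ≠ 0 := by positivity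
    field_simp

lemma auxS_zero (p : ℝ) (r : ℕ → ℕ → ℝ) (b : ℕ → ℝ)
    (hrec : clusterRec p (fun _ => 1) r b) : PowerSeries.constantCoeff (auxS p r b) = 0 := by
  have hb0 : b 0 = 0 := by rw [hrec.1]; simp
  have hP0 : auxP r 0 = 0 := by simp [auxP]
  rw [← PowerSeries.coeff_zero_eq_constantCoeff_apply]
  rw [auxS, map_add, PowerSeries.coeff_C_mul, PowerSeries.coeff_C_mul, PowerSeries.coeff_map,
    auxR, auxB, PowerSeries.coeff_mk, PowerSeries.coeff_mk, hb0, hP0]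
  simp

lemma aux_gen {R : Type*} [CommRing R] (c : ℝ →+* R) (u : R) (S T : PowerSeries R)
    (hS0 : PowerSeries.constantCoeff S = 0)
    (hT : ∀ n, PowerSeries.coeff n (PowerSeries.derivative R T) =
      u * ∑ δ ∈ Finset.range (n + 1),
        c ((δ.factorial : ℝ)⁻¹) * PowerSeries.coeff n (S ^ δ)) :
    PowerSeries.derivative R (PowerSeries.derivative R T) =
      PowerSeries.derivative R S * PowerSeries.derivative R T := by
  set E : PowerSeries R := PowerSeries.mk fun n => ∑ δ ∈ Finset.range (n + 1),
        c ((δ.factorial : ℝ)⁻¹) * PowerSeries.coeff n (S ^ δ) with hE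
  have hvan : ∀ n δ, n < δ → PowerSeries.coeff n (S ^ δ) = 0 := fun n δ h =>
    PowerSeries.coeff_of_lt_order _ (lt_of_lt_of_le (by exact_mod_cast h)
      (PowerSeries.le_order_pow_of_constantCoeff_eq_zero δ hS0))
  have hEN : ∀ N n, n ≤ N → PowerSeries.coeff n E = PowerSeries.coeff n
      (∑ δ ∈ Finset.range (N + 1), PowerSeries.C (c ((δ.factorial : ℝ)⁻¹)) * S ^ δ) := by
    intro N n h
    rw [hE, PowerSeries.coeff_mk, map_sum]
    simp only [PowerSeries.coeff_C_mul]
    refine Finset.sum_subset (by intro x; simp; omega) ?_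
    intro δ _ h2
    rw [hvan _ _ (by simpa using h2), mul_zero]
  have hR : PowerSeries.derivative R T = PowerSeries.C u * E := by
    ext1 n
    rw [hT, PowerSeries.coeff_C_mul, hE, PowerSeries.coeff_mk]
  have hE' : PowerSeries.derivative R E =
      PowerSeries.derivative R S * E := by
    ext1 n
    rw [PowerSeries.coeff_derivative, hEN (n + 1) (n + 1) le_rfl, ← PowerSeries.coeff_derivative,
      map_sum, Finset.sum_range_succ']
    have : PowerSeries.coeff n (PowerSeries.derivative R S * E) =
        PowerSeries.coeff n (PowerSeries.derivative R S *
        (∑ δ ∈ Finset.range (n + 1), PowerSeries.C (c ((δ.factorial : ℝ)⁻¹)) * S ^ δ)) := by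
      rw [PowerSeries.coeff_mul, PowerSeries.coeff_mul]
      refine Finset.sum_congr rfl fun ij hij => ?_
      rw [hEN n]
      simp at hij; omega
    rw [this]
    congr 1
    rw [Finset.mul_sum]
    simp only [pow_zero, mul_one, PowerSeries.derivative_C, add_zero]
    refine Finset.sum_congr rfl fun δ _ => ?_
    rw [Derivation.leibniz, PowerSeries.derivative_C, PowerSeries.derivative_pow]
    have : (PowerSeries.C (c (((δ + 1).factorial : ℝ)⁻¹)) : PowerSeries R) * ((δ + 1 : ℕ) : PowerSeries R)
        = PowerSeries.C (c ((δ.factorial : ℝ)⁻¹)) := by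
      rw [← map_natCast (PowerSeries.C (R := R)), ← map_natCast c, ← map_mul, ← map_mul]
      congr 2
      rw [Nat.factorial_succ]
      push_cast
      have : (δ.factorial : ℝ) ≠ 0 := by positivity
      have : (δ : ℝ) + 1 ≠ 0 := by positivity
      field_simp
    rw [← this]
    simp only [smul_eq_mul, mul_zero, add_zero, Nat.add_sub_cancel]
    ring
  rw [hR, Derivation.leibniz, PowerSeries.derivative_C, hE']
  simp only [smul_eq_mul, mul_zero, add_zero]
  ring

/-- second-order ODE -/
lemma aux_ode2 (p : ℝ) (r : ℕ → ℕ → ℝ) (b : ℕ → ℝ)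
    (hrec : clusterRec p (fun _ => 1) r b) :
    PowerSeries.derivative (Polynomial ℝ) (PowerSeries.derivative (Polynomial ℝ) (auxR r)) =
      PowerSeries.derivative (Polynomial ℝ) (auxS p r b) *
        PowerSeries.derivative (Polynomial ℝ) (auxR r) := by
  exact aux_gen Polynomial.C Polynomial.X _ _ (auxS_zero p r b hrec) (aux_ode1 p r b hrec)

lemma aux_deriv_map {R K : Type*} [CommRing R] [CommRing K] (φ : R →+* K) (F : PowerSeries R) :
    PowerSeries.derivative K (PowerSeries.map φ F) =
      PowerSeries.map φ (PowerSeries.derivative R F) := by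
  ext n
  rw [PowerSeries.coeff_derivative, PowerSeries.coeff_map, PowerSeries.coeff_map,
    PowerSeries.coeff_derivative]
  simp

lemma aux_leib {R : Type*} [CommRing R] (F G : PowerSeries R) :
    PowerSeries.derivative R (F * G) =
      PowerSeries.derivative R F * G + F * PowerSeries.derivative R G := by
  rw [Derivation.leibniz]; simp only [smul_eq_mul]; ring

lemma aux_deriv_sub {R : Type*} [CommRing R] (F G : PowerSeries R) :
    PowerSeries.derivative R (F - G) =
      PowerSeries.derivative R F - PowerSeries.derivative R G := map_sub _ _ _

lemma aux_deriv_add {R : Type*} [CommRing R] (F G : PowerSeries R) :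
    PowerSeries.derivative R (F + G) =
      PowerSeries.derivative R F + PowerSeries.derivative R G := map_add _ _ _

lemma aux_deriv_one_sub {R : Type*} [CommRing R] :
    PowerSeries.derivative R (1 - PowerSeries.X : PowerSeries R) = -1 := by
  rw [aux_deriv_sub, PowerSeries.derivative_one, PowerSeries.derivative_X]; ring

lemma aux_zero {R : Type*} [CommRing R] [IsDomain R] [CharZero R] (F H : PowerSeries R)
    (h0 : PowerSeries.coeff 0 F = 0)
    (h : (1 - PowerSeries.X) * PowerSeries.derivative R F = H * F) : F = 0 := by
  have h' : PowerSeries.derivative R F = (PowerSeries.mk 1 * H) * F := by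
    rw [mul_assoc, ← h, ← mul_assoc, PowerSeries.mk_one_mul_one_sub_eq_one, one_mul]
  ext n
  induction n using Nat.strong_induction_on with
  | _ n ih =>
  cases n with
  | zero => simpa using h0
  | succ n =>
    have h2 := congrArg (PowerSeries.coeff n) h'
    rw [PowerSeries.coeff_derivative, PowerSeries.coeff_mul, Finset.sum_eq_zero] at h2
    · have : ((n : R) + 1) ≠ 0 := by exact_mod_cast Nat.succ_ne_zero n
      simpa [this] using h2
    · intro ij hij
      rw [ih ij.2 (by simp at hij; omega)]
      simp

lemma aux_solve {R : Type*} [CommRing R] [IsDomain R] [CharZero R] (c : ℝ →+* R) (p : ℝ)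
    (x u : R) (hu : u * (1 - x) = 1) (T' G Y : PowerSeries R)
    (hG : G * (1 - PowerSeries.X) = 1)
    (hT : PowerSeries.derivative R T' =
      (PowerSeries.C (c p) * T' + PowerSeries.C (c (1 - p)) * G) * T')
    (hT0 : PowerSeries.coeff 0 T' = u)
    (hY : (1 - PowerSeries.X) * PowerSeries.derivative R Y = PowerSeries.C (c p) * Y)
    (hY0 : PowerSeries.coeff 0 Y = 1) :
    (1 - PowerSeries.X) * T' * (1 - PowerSeries.C x * Y) = 1 := by
  rw [← sub_eq_zero]
  apply aux_zero _ (PowerSeries.C (c p) * ((1 - PowerSeries.X) * T'))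
  · simp only [PowerSeries.coeff_zero_eq_constantCoeff] at hT0 hY0 ⊢
    simp [hT0, hY0, hu]
  · rw [map_sub, map_one] at hT
    rw [aux_deriv_sub, aux_leib, aux_leib, aux_deriv_one_sub, hT, aux_deriv_sub, aux_leib,
      PowerSeries.derivative_one, PowerSeries.derivative_C]
    rw [map_sub, map_one] 
    linear_combination (1 - PowerSeries.X) * (1 - PowerSeries.C x * Y) * T' * (1 - PowerSeries.C (c p)) * hG - (1 - PowerSeries.X) * T' * PowerSeries.C x * hY

lemma aux_extract (W : PowerSeries (PowerSeries ℝ)) (Y : PowerSeries ℝ)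
    (h : W * (1 - PowerSeries.C PowerSeries.X * PowerSeries.map PowerSeries.C Y) = 1) (k : ℕ) :
    ∀ n, PowerSeries.coeff k (PowerSeries.coeff n W) = PowerSeries.coeff n (Y ^ k) := by
  have h' : W = 1 + PowerSeries.C PowerSeries.X * (PowerSeries.map PowerSeries.C Y * W) := by
    linear_combination h
  induction k with
  | zero =>
    intro n
    rw [h', map_add, PowerSeries.coeff_C_mul]
    simp only [PowerSeries.coeff_one, pow_zero]
    split_ifs <;> simp
  | succ k ih =>
    intro n
    rw [h', map_add, PowerSeries.coeff_C_mul, map_add, PowerSeries.coeff_succ_X_mul,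
      PowerSeries.coeff_mul, map_sum, pow_succ', PowerSeries.coeff_mul]
    have : PowerSeries.coeff (k + 1) (PowerSeries.coeff n (1 : PowerSeries (PowerSeries ℝ))) = 0 := by
      simp only [PowerSeries.coeff_one]
      split_ifs <;> simp [PowerSeries.coeff_one]
    rw [this, zero_add]
    refine Finset.sum_congr rfl fun ij _ => ?_
    rw [PowerSeries.coeff_map, PowerSeries.coeff_C_mul, ih]

/-- `(1-z)^(-q)` -/
noncomputable def auxY (q : ℝ) : PowerSeries ℝ :=
  PowerSeries.mk fun n => (∏ i ∈ Finset.range n, (q + i)) / n.factorial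

lemma auxY_zero (q : ℝ) : PowerSeries.coeff 0 (auxY q) = 1 := by
  rw [auxY, PowerSeries.coeff_mk]; simp

lemma auxY_deriv (q : ℝ) :
    (1 - PowerSeries.X) * PowerSeries.derivative ℝ (auxY q) = PowerSeries.C q * auxY q := by
  have hs : ∀ n : ℕ, PowerSeries.coeff (n + 1) (auxY q) * ((n : ℝ) + 1) =
      (q + n) * PowerSeries.coeff n (auxY q) := by
    intro n
    rw [auxY, PowerSeries.coeff_mk, PowerSeries.coeff_mk, Finset.prod_range_succ,
      Nat.factorial_succ]
    have : (n.factorial : ℝ) ≠ 0 := by positivity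
    have : (n : ℝ) + 1 ≠ 0 := by positivity
    push_cast
    field_simp
  ext n
  rw [sub_mul, one_mul, map_sub, PowerSeries.coeff_C_mul, PowerSeries.coeff_derivative, hs]
  cases n with
  | zero => simp
  | succ n =>
    rw [PowerSeries.coeff_succ_X_mul, PowerSeries.coeff_derivative]
    push_cast; ring

lemma auxY_unique (q : ℝ) (F : PowerSeries ℝ) (h0 : PowerSeries.coeff 0 F = 1)
    (h : (1 - PowerSeries.X) * PowerSeries.derivative ℝ F = PowerSeries.C q * F) :
    F = auxY q := by
  rw [← sub_eq_zero]
  apply aux_zero _ (PowerSeries.C q)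
  · rw [map_sub, h0, auxY_zero, sub_self]
  · rw [aux_deriv_sub, mul_sub, h, auxY_deriv]; ring

lemma auxY_pow (p : ℝ) (k : ℕ) : PowerSeries.mk 1 * auxY p ^ k = auxY (p * k + 1) := by
  induction k with
  | zero =>
    apply auxY_unique
    · simp
    · have h1 : (1 - PowerSeries.X : PowerSeries ℝ) * PowerSeries.mk 1 = 1 := by
        rw [mul_comm]; exact PowerSeries.mk_one_mul_one_sub_eq_one ℝ
      have h2 := congrArg (PowerSeries.derivative ℝ) h1
      rw [aux_leib, aux_deriv_one_sub, PowerSeries.derivative_one] at h2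
      simp
      linear_combination h2
  | succ k ih =>
    rw [pow_succ, ← mul_assoc, ih]
    apply auxY_unique
    · have := auxY_zero
      simp only [PowerSeries.coeff_zero_eq_constantCoeff] at this ⊢
      simp [this]
    · rw [aux_leib]
      have e : (PowerSeries.C (p * ((k + 1 : ℕ) : ℝ) + 1) : PowerSeries ℝ) =
        PowerSeries.C (p * k + 1) + PowerSeries.C p := by
        rw [← map_add]; congr 1; push_cast; ring
      rw [e]
      linear_combination auxY p * auxY_deriv (p * k + 1) + auxY (p * k + 1) * auxY_deriv p

lemma aux_ode_map {K : Type*} [CommRing K] (φ : Polynomial ℝ →+* K) (p : ℝ)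
    (r : ℕ → ℕ → ℝ) (b : ℕ → ℝ) (hrec : clusterRec p (fun _ => 1) r b) :
    PowerSeries.derivative K (PowerSeries.map φ (PowerSeries.derivative _ (auxR r))) =
      (PowerSeries.C ((φ.comp Polynomial.C) p) *
          PowerSeries.map φ (PowerSeries.derivative _ (auxR r)) +
        PowerSeries.C ((φ.comp Polynomial.C) (1 - p)) *
          PowerSeries.map (φ.comp Polynomial.C) (PowerSeries.derivative _ (auxB b))) *
        PowerSeries.map φ (PowerSeries.derivative _ (auxR r)) := by
  rw [aux_deriv_map, aux_ode2 p r b hrec, map_mul]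
  congr 1
  rw [auxS, aux_deriv_add, aux_leib, aux_leib, PowerSeries.derivative_C, PowerSeries.derivative_C,
    zero_mul, zero_mul, zero_add, zero_add, map_add, map_mul, map_mul, aux_deriv_map,
    PowerSeries.map_C, PowerSeries.map_C]
  simp only [PowerSeries.map_comp, RingHom.comp_apply]

lemma aux_R0 (p : ℝ) (r : ℕ → ℕ → ℝ) (b : ℕ → ℝ) (hrec : clusterRec p (fun _ => 1) r b) :
    PowerSeries.coeff 0 (PowerSeries.derivative _ (auxR r)) = Polynomial.X := by
  rw [aux_ode1 p r b hrec]
  simp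

lemma aux_evalB (p : ℝ) (r : ℕ → ℕ → ℝ) (b : ℕ → ℝ) (hrec : clusterRec p (fun _ => 1) r b) :
    PowerSeries.map (Polynomial.evalRingHom 1) (auxR r) = auxB b := by
  ext n
  rw [PowerSeries.coeff_map, auxR, auxB, PowerSeries.coeff_mk, PowerSeries.coeff_mk, hrec.1]
  simp [auxP, Polynomial.eval_finsetSum]

lemma aux_B (p : ℝ) (r : ℕ → ℕ → ℝ) (b : ℕ → ℝ) (hrec : clusterRec p (fun _ => 1) r b) :
    PowerSeries.derivative ℝ (auxB b) * (1 - PowerSeries.X) = 1 := by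
  have h := aux_ode_map (Polynomial.evalRingHom 1) p r b hrec
  have h0 := congrArg (Polynomial.evalRingHom 1) (aux_R0 p r b hrec)
  rw [← PowerSeries.coeff_map] at h0
  rw [← aux_deriv_map, aux_evalB p r b hrec] at h h0
  have hc : (Polynomial.evalRingHom (1 : ℝ)).comp Polynomial.C = RingHom.id ℝ := by
    ext; simp
  rw [hc, PowerSeries.map_id] at h
  simp only [RingHom.id_apply, id_eq] at h
  rw [map_sub, map_one] at h
  rw [← sub_eq_zero]
  apply aux_zero _ ((1 - PowerSeries.X) * PowerSeries.derivative ℝ (auxB b))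
  · simp only [PowerSeries.coeff_zero_eq_constantCoeff] at h0 ⊢
    simp [h0]
  · rw [aux_deriv_sub, aux_leib, aux_deriv_one_sub, h, PowerSeries.derivative_one]
    ring

lemma aux_b (p : ℝ) (r : ℕ → ℕ → ℝ) (b : ℕ → ℝ) (hrec : clusterRec p (fun _ => 1) r b) (n : ℕ) :
    b (n + 1) = n.factorial := by
  have h : PowerSeries.derivative ℝ (auxB b) = PowerSeries.mk 1 := by
    have h1 := aux_B p r b hrec
    have h2 := PowerSeries.mk_one_mul_one_sub_eq_one ℝ
    linear_combination (PowerSeries.mk 1) * h1 - PowerSeries.derivative ℝ (auxB b) * h2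
  have h2 := congrArg (PowerSeries.coeff n) h
  rw [PowerSeries.coeff_derivative, auxB, PowerSeries.coeff_mk, PowerSeries.coeff_mk,
    Nat.factorial_succ] at h2
  have : (n.factorial : ℝ) ≠ 0 := by positivity
  have : (n : ℝ) + 1 ≠ 0 := by positivity
  push_cast at h2
  simp only [Pi.one_apply] at h2
  field_simp at h2
  exact h2

lemma aux_moment (p : ℝ) (r : ℕ → ℕ → ℝ) (b : ℕ → ℝ) (hrec : clusterRec p (fun _ => 1) r b)
    (n k : ℕ) :
    (∑ j ∈ Finset.Icc 1 (n + 1), (ascPochhammer ℝ k).eval (j : ℝ) * r (n + 1) j) / b (n + 1) =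
      k.factorial * ((∏ i ∈ Finset.range n, (p * k + 1 + i)) / n.factorial) := by
  set φ : Polynomial ℝ →+* PowerSeries ℝ :=
    Polynomial.eval₂RingHom PowerSeries.C (PowerSeries.mk 1) with hφ
  have hc : φ.comp Polynomial.C = PowerSeries.C := by
    ext1 x; simp [hφ]
  have hode := aux_ode_map φ p r b hrec
  have h0 := congrArg φ (aux_R0 p r b hrec)
  rw [← PowerSeries.coeff_map] at h0
  have hX : φ Polynomial.X = PowerSeries.mk 1 := by simp [hφ]
  rw [hX] at h0
  rw [hc] at hode
  haveI : CharZero (PowerSeries ℝ) := charZero_of_injective_ringHom (PowerSeries.C_injective (R := ℝ))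
  set T := PowerSeries.map φ (PowerSeries.derivative _ (auxR r)) with hT
  have hW := aux_solve PowerSeries.C p PowerSeries.X (PowerSeries.mk 1)
    (PowerSeries.mk_one_mul_one_sub_eq_one ℝ) T
    (PowerSeries.map PowerSeries.C (PowerSeries.derivative _ (auxB b)))
    (PowerSeries.map PowerSeries.C (auxY p)) ?_ hode h0 ?_ ?_
  rotate_left
  · have := congrArg (PowerSeries.map PowerSeries.C) (aux_B p r b hrec)
    rw [map_mul, map_one, map_sub, map_one, PowerSeries.map_X] at this
    exact this
  · have := congrArg (PowerSeries.map PowerSeries.C) (auxY_deriv p)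
    rw [map_mul, map_mul, map_sub, map_one, PowerSeries.map_X, PowerSeries.map_C,
      ← aux_deriv_map] at this
    exact this
  · rw [PowerSeries.coeff_map, auxY_zero, map_one]
  have hex := aux_extract _ _ hW k
  have hTW : T = PowerSeries.mk 1 * ((1 - PowerSeries.X) * T) := by
    rw [← mul_assoc, PowerSeries.mk_one_mul_one_sub_eq_one, one_mul]
  have key : PowerSeries.coeff k (PowerSeries.coeff n T) =
      PowerSeries.coeff n (auxY (p * k + 1)) := by
    rw [← auxY_pow, hTW, PowerSeries.coeff_mul, PowerSeries.coeff_mul, map_sum]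
    refine Finset.sum_congr rfl fun ij _ => ?_
    rw [PowerSeries.coeff_mk, PowerSeries.coeff_mk, Pi.one_apply, Pi.one_apply, one_mul, one_mul,
      hex]
  rw [auxY, PowerSeries.coeff_mk] at key
  rw [← key, aux_b p r b hrec]
  have hTn : PowerSeries.coeff n T = PowerSeries.C ((n.factorial : ℝ)⁻¹) * φ (auxP r (n + 1)) := by
    rw [hT, PowerSeries.coeff_map, PowerSeries.coeff_derivative, auxR, PowerSeries.coeff_mk]
    have : ((n : Polynomial ℝ) + 1) = Polynomial.C ((n : ℝ) + 1) := by simp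
    rw [this, mul_right_comm, ← Polynomial.C_mul, map_mul, ← RingHom.comp_apply, hc]
    congr 2
    rw [Nat.factorial_succ]
    push_cast
    have : (n.factorial : ℝ) ≠ 0 := by positivity
    have : (n : ℝ) + 1 ≠ 0 := by positivity
    field_simp
  have hcoe : ∀ j : ℕ, 1 ≤ j → (k.factorial : ℝ) * PowerSeries.coeff k ((PowerSeries.mk 1 : PowerSeries ℝ) ^ j)
      = (ascPochhammer ℝ k).eval (j : ℝ) := by
    intro j hj
    obtain ⟨d, rfl⟩ : ∃ d, j = d + 1 := ⟨j - 1, by omega⟩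
    rw [PowerSeries.mk_one_pow_eq_mk_choose_add, PowerSeries.coeff_mk,
      ascPochhammer_nat_eq_natCast_ascFactorial, Nat.ascFactorial_eq_factorial_mul_choose]
    rw [Nat.choose_symm_add]
    push_cast
    congr 2
  rw [hTn, PowerSeries.coeff_C_mul, auxP, map_sum, map_sum, Finset.mul_sum, Finset.mul_sum,
    Finset.sum_div]
  refine Finset.sum_congr rfl fun j hj => ?_
  rw [← hcoe j (Finset.mem_Icc.mp hj).1, hφ, Polynomial.coe_eval₂RingHom,
    Polynomial.eval₂_monomial, PowerSeries.coeff_C_mul]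
  ring

lemma aux_gamma (q : ℝ) (hq : 0 ≤ q) :
    Tendsto (fun n : ℕ => (∏ i ∈ Finset.range n, (q + 1 + i)) / n.factorial /
      ((n + 1 : ℕ) : ℝ) ^ q) atTop (nhds (1 / Real.Gamma (q + 1))) := by
  have hG := Real.GammaSeq_tendsto_Gamma (q + 1)
  have hG0 : Real.Gamma (q + 1) ≠ 0 := (Real.Gamma_pos_of_pos (by linarith)).ne'
  have h1 : Tendsto (fun n : ℕ => (n : ℝ) / (n + (q + 1))) atTop (nhds 1) :=
    tendsto_natCast_div_add_atTop (q + 1)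
  have h2 : Tendsto (fun n : ℕ => ((n : ℝ) / (n + 1)) ^ q) atTop (nhds 1) := by
    have := (tendsto_natCast_div_add_atTop (1 : ℝ)).rpow_const (p := q) (Or.inl one_ne_zero)
    simpa using this
  have h3 := (h2.mul h1).div hG hG0
  rw [one_mul] at h3
  refine h3.congr' ?_
  filter_upwards [eventually_ge_atTop 1] with n hn
  have hn0 : (0 : ℝ) < n := by exact_mod_cast hn
  have hprod : 0 < ∏ i ∈ Finset.range n, (q + 1 + (i : ℝ)) :=
    Finset.prod_pos fun i _ => by positivity
  have hfac : (0 : ℝ) < n.factorial := by positivity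
  have hpw : (0 : ℝ) < (n : ℝ) ^ q := Real.rpow_pos_of_pos hn0 _
  have hpw1 : (0 : ℝ) < ((n : ℝ) + 1) ^ q := Real.rpow_pos_of_pos (by linarith) _
  simp only [Pi.div_apply]
  rw [Real.GammaSeq, Finset.prod_range_succ, Real.rpow_add_one hn0.ne',
    Real.div_rpow hn0.le (by linarith)]
  push_cast
  have : 0 < q + 1 + (n : ℝ) := by positivity
  have : 0 < (n : ℝ) + (q + 1) := by positivity
  field_simp
  ring

lemma aux_asc (p : ℝ) (hp0 : 0 < p) (r : ℕ → ℕ → ℝ) (b : ℕ → ℝ)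
    (hrec : clusterRec p (fun _ => 1) r b) (k : ℕ) :
    Tendsto (fun n : ℕ =>
        ((∑ j ∈ Finset.Icc 1 n, (ascPochhammer ℝ k).eval (j : ℝ) * r n j) / b n) /
          (n : ℝ) ^ (p * (k : ℝ)))
      atTop (nhds ((k.factorial : ℝ) / Real.Gamma (p * (k : ℝ) + 1))) := by
  rw [← tendsto_add_atTop_iff_nat 1]
  have h := (aux_gamma (p * k) (by positivity)).const_mul (k.factorial : ℝ)
  rw [mul_one_div] at h
  refine h.congr fun n => ?_
  rw [aux_moment p r b hrec]
  ring

lemma aux_pow (p : ℝ) (hp0 : 0 < p) (r : ℕ → ℕ → ℝ) (b : ℕ → ℝ)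
    (hrec : clusterRec p (fun _ => 1) r b) (k : ℕ) :
    Tendsto (fun n : ℕ =>
        ((∑ j ∈ Finset.Icc 1 n, (j : ℝ) ^ k * r n j) / b n) / (n : ℝ) ^ (p * (k : ℝ)))
      atTop (nhds ((k.factorial : ℝ) / Real.Gamma (p * (k : ℝ) + 1))) := by
  induction k using Nat.strong_induction_on with
  | _ k ih =>
  have hasc : ∀ x : ℝ, x ^ k = (ascPochhammer ℝ k).eval x -
      ∑ i ∈ Finset.range k, (ascPochhammer ℝ k).coeff i * x ^ i := by
    intro x
    rw [Polynomial.eval_eq_sum_range, ascPochhammer_natDegree, Finset.sum_range_succ]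
    have : (ascPochhammer ℝ k).coeff k = 1 := by
      have := (monic_ascPochhammer ℝ k).coeff_natDegree
      rwa [ascPochhammer_natDegree] at this
    rw [this]; ring
  have hlow : Tendsto (fun n : ℕ => ∑ i ∈ Finset.range k, (ascPochhammer ℝ k).coeff i *
      (((∑ j ∈ Finset.Icc 1 n, (j : ℝ) ^ i * r n j) / b n) / (n : ℝ) ^ (p * (i : ℝ)) *
        (n : ℝ) ^ (-(p * ((k : ℝ) - i))))) atTop (nhds 0) := by
    rw [show (0 : ℝ) = ∑ i ∈ Finset.range k, (ascPochhammer ℝ k).coeff i *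
      ((i.factorial : ℝ) / Real.Gamma (p * (i : ℝ) + 1) * 0) by simp]
    refine tendsto_finsetSum _ fun i hi => ?_
    have hik : i < k := Finset.mem_range.mp hi
    refine ((ih i hik).mul ?_).const_mul _
    have hpos : 0 < p * ((k : ℝ) - i) := mul_pos hp0 (sub_pos.mpr (by exact_mod_cast hik))
    exact (tendsto_rpow_neg_atTop hpos).comp tendsto_natCast_atTop_atTop
  have := (aux_asc p hp0 r b hrec k).sub hlow
  rw [sub_zero] at this
  refine this.congr' ?_
  filter_upwards [eventually_ge_atTop 1] with n hn
  have hn0 : (0 : ℝ) < n := by exact_mod_cast hn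
  have e : ∀ i : ℕ, (n : ℝ) ^ (-(p * ((k : ℝ) - i))) =
      (n : ℝ) ^ (p * (i : ℝ)) / (n : ℝ) ^ (p * (k : ℝ)) := by
    intro i
    rw [← Real.rpow_sub hn0]; congr 1; ring
  have e2 : ∀ i ∈ Finset.range k, (ascPochhammer ℝ k).coeff i *
      (((∑ j ∈ Finset.Icc 1 n, (j : ℝ) ^ i * r n j) / b n) / (n : ℝ) ^ (p * (i : ℝ)) *
        (n : ℝ) ^ (-(p * ((k : ℝ) - i)))) =
      (∑ j ∈ Finset.Icc 1 n, (ascPochhammer ℝ k).coeff i * (j : ℝ) ^ i * r n j) *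
        ((b n)⁻¹ * ((n : ℝ) ^ (p * (k : ℝ)))⁻¹) := by
    intro i _
    have hpw : (n : ℝ) ^ (p * (i : ℝ)) ≠ 0 := (Real.rpow_pos_of_pos hn0 _).ne'
    rw [e, div_mul_div_cancel₀ hpw, div_eq_mul_inv, div_eq_mul_inv]
    simp only [mul_assoc]
    rw [← Finset.mul_sum]
    ring
  rw [Finset.sum_congr rfl e2, ← Finset.sum_mul, Finset.sum_comm]
  have e3 : ∑ j ∈ Finset.Icc 1 n, (j : ℝ) ^ k * r n j =
      ∑ j ∈ Finset.Icc 1 n, (ascPochhammer ℝ k).eval (j : ℝ) * r n j -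
      ∑ j ∈ Finset.Icc 1 n, ∑ i ∈ Finset.range k,
        (ascPochhammer ℝ k).coeff i * (j : ℝ) ^ i * r n j := by
    simp only [hasc, sub_mul, Finset.sum_sub_distrib, Finset.sum_mul]
  rw [e3]
  ring

/-- for random recursive trees (`φ(δ) = 1`), the `k`-th moment of the
root-cluster size, normalized by `n^{pk}`, converges to `k!/Γ(pk+1)` (the `k`-th
moment of the Mittag-Leffler distribution with parameter `p`). -/
theorem stmt2 (p : ℝ) (hp0 : 0 < p) (hp1 : p < 1)
    (r : ℕ → ℕ → ℝ) (b : ℕ → ℝ)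
    (hrec : clusterRec p (fun _ => 1) r b)
    (k : ℕ) (hk : 1 ≤ k) :
    Tendsto (fun n : ℕ =>
        ((∑ j ∈ Finset.Icc 1 n, (j : ℝ) ^ k * r n j) / b n) / (n : ℝ) ^ (p * (k : ℝ)))
      atTop (nhds ((k.factorial : ℝ) / Real.Gamma (p * (k : ℝ) + 1))) := by
  have main := aux_pow p hp0 r b hrec k
  exact main
end

section
/- Let α>0, 0<p<1, and let r_{n,k} be the root-cluster weights for linear preferential attachment trees with parameter α (φ(δ)=Γ(δ+1/α)/Γ(1/α)). Then for every integer k ≥ 1, the normalized k-th moment of the root-cluster size satisfies lim_{n→∞} m_k(n)/n^{k(p+α)/(1+α)} = C_k·(1+α)·Γ(1/(1+α))/(α·Γ((kp+α(k-1))/(1+α))), where C_k is given by the Bell-polynomial recursion. -/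
open Finset Filter Asymptotics

noncomputable section
namespace RC
open PowerSeries
set_option linter.unusedSectionVars false

/-- coefficients of `(1-x)^{-s}` -/
def c (s : ℝ) (n : ℕ) : ℝ := (∏ i ∈ Finset.range n, (s + i)) / (n.factorial : ℝ)

lemma c_zero (s : ℝ) : c s 0 = 1 := by simp [c]

lemma c_succ (s : ℝ) (n : ℕ) : c s (n+1) * ((n:ℝ)+1) = (s + n) * c s n := by
  unfold c
  rw [Finset.prod_range_succ, Nat.factorial_succ]
  have h : (n.factorial : ℝ) ≠ 0 := by positivity
  have h' : (n:ℝ) + 1 ≠ 0 := by positivity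
  push_cast
  field_simp

lemma c_pos {s : ℝ} (hs : 0 < s) (n : ℕ) : 0 < c s n := by
  unfold c
  have : 0 < ∏ i ∈ Finset.range n, (s + i) := Finset.prod_pos (fun i _ => by positivity)
  positivity

section alg
variable {K : Type*} [CommRing K] [Algebra ℝ K]

variable (K) in
/-- the power series `(1-x)^{-s}` -/
def P (s : ℝ) : K⟦X⟧ := PowerSeries.mk fun n => algebraMap ℝ K (c s n)

lemma cancel_nat (n : ℕ) (a : K) (h : a * ((n:K)+1) = 0) : a = 0 := by
  have h1 : ((n:K)+1) * algebraMap ℝ K (1/((n:ℝ)+1)) = 1 := by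
    have : ((n:K)+1) = algebraMap ℝ K ((n:ℝ)+1) := by simp
    rw [this, ← map_mul, mul_one_div_cancel (by positivity), map_one]
  calc a = a * (((n:K)+1) * algebraMap ℝ K (1/((n:ℝ)+1))) := by rw [h1, mul_one]
    _ = 0 := by rw [← mul_assoc, h, zero_mul]

lemma uniq0 (W Q H : K⟦X⟧) (hW : constantCoeff W = 0) (h : (1 - W) * d⁄dX K H = Q * H)
    (h0 : constantCoeff H = 0) : H = 0 := by
  have key : ∀ n, ∀ i ≤ n, coeff i H = 0 := by
    intro n
    induction n with
    | zero => intro i hi; obtain rfl : i = 0 := by omega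
              simpa using h0
    | succ n ih =>
      intro i hi
      rcases Nat.lt_or_ge i (n+1) with h1 | h1
      · exact ih i (by omega)
      obtain rfl : i = n + 1 := by omega
      have e := congrArg (coeff n) h
      rw [coeff_mul, coeff_mul] at e
      rw [Finset.sum_eq_single (0, n)] at e
      · rw [Finset.sum_eq_zero] at e
        · simp [coeff_derivative, hW] at e
          exact cancel_nat n _ e
        · rintro ⟨a, b⟩ hab
          simp at hab
          simp [ih b (by omega)]
      · rintro ⟨a, b⟩ hab hne
        simp at hab
        have : b < n := by
          rcases Nat.lt_or_ge b n with h2 | h2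
          · exact h2
          · exfalso; apply hne; ext <;> simp <;> omega
        simp [coeff_derivative, ih (b+1) (by omega)]
      · simp
  ext n
  simpa using key n n le_rfl

lemma uniq (W Q F G : K⟦X⟧) (hW : constantCoeff W = 0) (hF : (1 - W) * d⁄dX K F = Q * F)
    (hG : (1 - W) * d⁄dX K G = Q * G)
    (h0 : constantCoeff F = constantCoeff G) : F = G := by
  rw [← sub_eq_zero]
  apply uniq0 W Q _ hW
  · rw [map_sub, mul_sub, hF, hG]; ring
  · simp [h0]

variable (K) in
/-- constants -/
def cc (s : ℝ) : K⟦X⟧ := PowerSeries.C (algebraMap ℝ K s)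

@[simp] lemma cc_add (s t : ℝ) : cc K (s + t) = cc K s + cc K t := by simp [cc]
@[simp] lemma cc_mul (s t : ℝ) : cc K (s * t) = cc K s * cc K t := by simp [cc]
@[simp] lemma cc_neg (s : ℝ) : cc K (-s) = - cc K s := by simp [cc]
@[simp] lemma cc_one : cc K 1 = 1 := by simp [cc]
@[simp] lemma cc_zero : cc K 0 = 0 := by simp [cc]
@[simp] lemma d_cc (s : ℝ) : d⁄dX K (cc K s) = 0 := by simp [cc]
@[simp] lemma coeff_cc_mul (s : ℝ) (f : K⟦X⟧) (n : ℕ) :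
    coeff n (cc K s * f) = algebraMap ℝ K s * coeff n f := by simp [cc]
@[simp] lemma constantCoeff_cc (s : ℝ) : constantCoeff (cc K s) = algebraMap ℝ K s := by simp [cc]

@[simp] lemma coeff_P (s : ℝ) (n : ℕ) : coeff n (P K s) = algebraMap ℝ K (c s n) := by simp [P]
@[simp] lemma P_const (s : ℝ) : constantCoeff (P K s) = 1 := by
  rw [← coeff_zero_eq_constantCoeff_apply, coeff_P, c_zero, map_one]

lemma P_ode (s : ℝ) : (1 - X) * d⁄dX K (P K s) = cc K s * P K s := by
  ext n
  rw [sub_mul, one_mul, map_sub, coeff_cc_mul]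
  rcases n with _ | n
  · have := c_succ s 0
    simp [coeff_derivative, c_zero] at this ⊢
    simp [this]
  · rw [coeff_succ_X_mul, coeff_derivative, coeff_derivative, coeff_P, coeff_P]
    have := congrArg (algebraMap ℝ K) (c_succ s (n+1))
    simp only [map_mul, map_add, map_natCast, map_one] at this
    push_cast at this ⊢
    rw [this]
    ring

lemma P_mul (s t : ℝ) : P K s * P K t = P K (s + t) := by
  apply uniq X (cc K (s+t))
  · simp
  · rw [Derivation.leibniz]
    simp only [smul_eq_mul]
    have h1 := P_ode (K := K) s
    have h2 := P_ode (K := K) t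
    rw [cc_add]
    linear_combination P K s * h2 + P K t * h1
  · exact P_ode _
  · simp

lemma P_zero : P K 0 = 1 := by
  apply uniq X (cc K 0)
  · simp
  · exact P_ode _
  · simp
  · simp

lemma P_neg_one : P K (-1) = 1 - X := by
  apply uniq X (cc K (-1))
  · simp
  · exact P_ode _
  · simp
  · simp

lemma P_deriv (s : ℝ) : d⁄dX K (P K s) = cc K s * P K (s+1) := by
  have h : P K (1) * (1 - X) = 1 := by rw [← P_neg_one, P_mul, add_neg_cancel, P_zero]
  rw [← P_mul]
  linear_combination P K 1 * P_ode (K := K) s - d⁄dX K (P K s) * h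

/-- `(1-W)^{-s}` -/
def Q (s : ℝ) (W : K⟦X⟧) : K⟦X⟧ := (P K s).subst W

lemma Q_mul (s t : ℝ) {W : K⟦X⟧} (hW : constantCoeff W = 0) : Q s W * Q t W = Q (s+t) W := by
  have hs := HasSubst.of_constantCoeff_zero' hW
  rw [Q, Q, ← subst_mul hs, P_mul, Q]

lemma Q_zero {W : K⟦X⟧} (hW : constantCoeff W = 0) : Q 0 W = 1 := by
  have hs := HasSubst.of_constantCoeff_zero' hW
  rw [Q, P_zero, ← coe_substAlgHom hs, map_one]

lemma Q_neg_one {W : K⟦X⟧} (hW : constantCoeff W = 0) : Q (-1) W = 1 - W := by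
  have hs := HasSubst.of_constantCoeff_zero' hW
  rw [Q, P_neg_one, ← coe_substAlgHom hs, map_sub, map_one, coe_substAlgHom hs, subst_X hs]

lemma Q_deriv (s : ℝ) {W : K⟦X⟧} (hW : constantCoeff W = 0) :
    d⁄dX K (Q s W) = cc K s * Q (s+1) W * d⁄dX K W := by
  have hs := HasSubst.of_constantCoeff_zero' hW
  rw [Q, derivative_subst hs, P_deriv, subst_mul hs, Q, cc]
  congr 2
  exact subst_C _

lemma coeff_Q (s : ℝ) {W : K⟦X⟧} (hW : constantCoeff W = 0) (n N : ℕ) (hN : n < N) :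
    coeff n (Q s W) = ∑ d ∈ Finset.range N, algebraMap ℝ K (c s d) * coeff n (W ^ d) := by
  have hs := HasSubst.of_constantCoeff_zero' hW
  rw [Q, coeff_subst' hs]
  rw [finsum_eq_sum_of_support_subset (s := Finset.range N)]
  · simp
  · intro d hd
    simp only [Function.mem_support] at hd
    simp only [Finset.coe_range, Set.mem_Iio]
    by_contra hc
    apply hd
    have : (X:K⟦X⟧)^d ∣ W^d := pow_dvd_pow_of_dvd (X_dvd_iff.mpr hW) d
    rw [X_pow_dvd_iff.mp this n (by omega), smul_zero]

lemma Q_const (s : ℝ) {W : K⟦X⟧} (hW : constantCoeff W = 0) : constantCoeff (Q s W) = 1 := by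
  rw [← coeff_zero_eq_constantCoeff_apply, coeff_Q s hW 0 1 (by omega)]
  simp [c_zero]

lemma Q_ode (s : ℝ) {W : K⟦X⟧} (hW : constantCoeff W = 0) :
    (1 - W) * d⁄dX K (Q s W) = (cc K s * d⁄dX K W) * Q s W := by
  have h : Q s W = Q (-1) W * Q (s+1) W := by rw [Q_mul _ _ hW]; congr 1; ring
  rw [Q_deriv s hW, h, Q_neg_one hW]; ring

end alg

section recn
variable {K : Type*} [CommRing K] [Algebra ℝ K]

lemma coeff_prod_fin (δ : ℕ) (F : Fin δ → K⟦X⟧) (n : ℕ) :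
    coeff n (∏ i, F i) = ∑ f ∈ Finset.Nat.antidiagonalTuple δ n, ∏ i, coeff (f i) (F i) := by
  classical
  rw [PowerSeries.coeff_prod]
  refine Finset.sum_bij' (fun l _ => (l : Fin δ → ℕ)) (fun f _ => Finsupp.equivFunOnFinite.symm f)
    ?_ ?_ ?_ ?_ ?_
  · intro l hl
    rw [Finset.Nat.mem_antidiagonalTuple]
    exact (Finset.mem_finsuppAntidiag.mp hl).1
  · intro f hf
    rw [Finset.Nat.mem_antidiagonalTuple] at hf
    rw [Finset.mem_finsuppAntidiag]
    exact ⟨by simpa using hf, by simp⟩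
  · intro l hl; ext i; simp
  · intro f hf; ext i; simp
  · intro l hl; rfl

lemma prod_split (δ s : ℕ) (hs : s ≤ δ) (x y : Fin δ → K) :
    (∏ i : Fin δ, if (i:ℕ) < s then x i else y i)
      = (∏ i : Fin s, x (Fin.castLE hs i)) * ∏ j ∈ Finset.univ.filter (fun j : Fin δ => s ≤ (j : ℕ)), y j := by
  rw [Finset.prod_ite]
  congr 1
  · symm
    refine Finset.prod_bij (fun i _ => Fin.castLE hs i) ?_ ?_ ?_ ?_
    · intro i _; simp
    · intro i _ j _ h; simpa using h
    · intro j hj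
      simp at hj
      exact ⟨⟨j, hj⟩, by simp, by ext; simp⟩
    · intro i _; rfl
  · simp only [not_lt]

lemma prod_split_const (δ s : ℕ) (hs : s ≤ δ) (x y : K) :
    (∏ i : Fin δ, if (i:ℕ) < s then x else y) = x ^ s * y ^ (δ - s) := by
  rw [Finset.prod_ite]
  simp only [Finset.prod_const, not_lt]
  have h1 : (Finset.univ.filter (fun j : Fin δ => (j : ℕ) < s)).card = s := by
    have h := Fin.card_filter_val_lt (n := δ) (m := s)
    simpa [hs] using h
  have h2 : (Finset.univ.filter (fun j : Fin δ => s ≤ (j : ℕ))).card = δ - s := by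
    have h := Finset.card_filter_add_card_filter_not (s := (Finset.univ : Finset (Fin δ))) (fun j : Fin δ => (j : ℕ) < s)
    simp only [not_lt, Finset.card_univ, Fintype.card_fin] at h
    omega
  rw [h1, h2]

lemma sum_castLE (δ s : ℕ) (hs : s ≤ δ) (f : Fin δ → ℕ) :
    ∑ i : Fin s, f (Fin.castLE hs i) ≤ ∑ i, f i := by
  have := Finset.sum_map (Finset.univ : Finset (Fin s)) (Fin.castLEEmb hs) f
  simp only [Fin.coe_castLEEmb] at this
  rw [← this]
  exact Finset.sum_le_sum_of_subset (Finset.subset_univ _)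

lemma support {p : ℝ} {φ : ℕ → ℝ} {r : ℕ → ℕ → ℝ} {b : ℕ → ℝ} (h : clusterRec p φ r b) :
    ∀ n k : ℕ, 1 ≤ n → n < k → r n k = 0 := by
  intro n
  induction n using Nat.strong_induction_on with
  | _ n ih =>
  intro k hn hk
  rw [h.2 n k hn (by omega)]
  refine Finset.sum_eq_zero fun δ hδ => Finset.sum_eq_zero fun s hs => ?_
  rw [Finset.sum_eq_zero, mul_zero]
  intro f hf
  rw [Finset.sum_eq_zero, mul_zero]
  intro g hg
  rw [Finset.mem_filter, Finset.Nat.mem_antidiagonalTuple] at hf hg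
  have hsd : s.1 ≤ δ := Nat.lt_succ_iff.mp (Finset.mem_range.mp s.2)
  have hex : ∃ i : Fin s.1, f (Fin.castLE hsd i) < g i := by
    by_contra hc
    push Not at hc
    have h1 : ∑ i, g i ≤ ∑ i : Fin s.1, f (Fin.castLE hsd i) := Finset.sum_le_sum fun i _ => hc i
    have h2 : ∑ i : Fin s.1, f (Fin.castLE hsd i) ≤ ∑ i, f i := sum_castLE _ _ _ _
    omega
  obtain ⟨i, hi⟩ := hex
  have hle : f (Fin.castLE hsd i) ≤ n - 1 := by
    rw [← hf.1]; exact Finset.single_le_sum (fun _ _ => Nat.zero_le _) (Finset.mem_univ _)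
  have hz := ih (f (Fin.castLE hsd i)) (by omega) (g i) (hf.2 _) hi
  rw [Finset.prod_eq_zero (Finset.mem_univ i) hz]
  ring

/-- moment polynomial -/
def rho (r : ℕ → ℕ → ℝ) (u : K) (n : ℕ) : K := ∑ j ∈ Finset.Icc 1 n, algebraMap ℝ K (r n j) * u ^ j

/-- bivariate generating function -/
def Rs (r : ℕ → ℕ → ℝ) (β : ℝ) (u : K) : K⟦X⟧ :=
  PowerSeries.mk fun n => algebraMap ℝ K (β ^ n / (n.factorial : ℝ)) * rho r u n

variable (K) in
/-- total generating function -/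
def Bs (b : ℕ → ℝ) (β : ℝ) : K⟦X⟧ :=
  PowerSeries.mk fun n => algebraMap ℝ K (β ^ n / (n.factorial : ℝ)) * algebraMap ℝ K (b n)

lemma prod_rho {r : ℕ → ℕ → ℝ} (hr : ∀ n k : ℕ, 1 ≤ n → n < k → r n k = 0) (u : K)
    (s n : ℕ) (f : Fin s → ℕ) (hf : ∑ i, f i ≤ n) (hf1 : ∀ i, 1 ≤ f i) :
    ∏ i, rho r u (f i) = ∑ k ∈ Finset.range (n+1),
      u ^ k * ∑ g ∈ (Finset.Nat.antidiagonalTuple s k).filter (fun g => ∀ i, 1 ≤ g i),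
        ∏ i, algebraMap ℝ K (r (f i) (g i)) := by
  classical
  unfold rho
  rw [Finset.prod_univ_sum]
  simp_rw [Finset.mul_sum]
  rw [Finset.sum_sigma']
  symm
  apply Finset.sum_bij_ne_zero (fun x _ _ => x.2)
  · rintro ⟨k, g⟩ hk hne
    simp only [Finset.mem_sigma, Finset.mem_range, Finset.mem_filter,
      Finset.Nat.mem_antidiagonalTuple] at hk
    rw [Fintype.mem_piFinset]
    intro i
    rw [Finset.mem_Icc]
    refine ⟨hk.2.2 i, ?_⟩
    by_contra hc
    apply hne
    rw [Finset.prod_eq_zero (Finset.mem_univ i), mul_zero]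
    rw [hr _ _ (hf1 i) (by simpa using hc), map_zero]
  · rintro ⟨k, g⟩ hk _ ⟨k', g'⟩ hk' _ h
    simp only [Finset.mem_sigma, Finset.mem_range, Finset.mem_filter,
      Finset.Nat.mem_antidiagonalTuple] at hk hk' h
    subst h
    obtain rfl : k = k' := by rw [← hk.2.1, ← hk'.2.1]
    rfl
  · intro g hg hne
    rw [Fintype.mem_piFinset] at hg
    simp only [Finset.mem_Icc] at hg
    have hsum : ∑ i, g i ≤ n := le_trans (Finset.sum_le_sum fun i _ => (hg i).2) hf
    refine ⟨⟨∑ i, g i, g⟩, ?_, ?_, rfl⟩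
    · simp only [Finset.mem_sigma, Finset.mem_range, Finset.mem_filter,
        Finset.Nat.mem_antidiagonalTuple]
      exact ⟨by omega, trivial, fun i => (hg i).1⟩
    · intro h0; apply hne
      rw [Finset.prod_mul_distrib, Finset.prod_pow_eq_pow_sum, mul_comm]; exact h0
  · rintro ⟨k, g⟩ hk hne
    simp only [Finset.mem_sigma, Finset.mem_range, Finset.mem_filter,
      Finset.Nat.mem_antidiagonalTuple] at hk
    rw [Finset.prod_mul_distrib, Finset.prod_pow_eq_pow_sum, mul_comm, hk.2.1]

lemma Rs_const (r : ℕ → ℕ → ℝ) (β : ℝ) (u : K) : constantCoeff (Rs r β u) = 0 := by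
  rw [← coeff_zero_eq_constantCoeff_apply]; simp [Rs, rho]

lemma coeff_RB {p : ℝ} {φ : ℕ → ℝ} {r : ℕ → ℕ → ℝ} {b : ℕ → ℝ} (h : clusterRec p φ r b)
    (β : ℝ) (u : K) (δ s n : ℕ) (hs : s ≤ δ) :
    coeff n (Rs r β u ^ s * Bs K b β ^ (δ - s)) =
      ∑ f ∈ (Finset.Nat.antidiagonalTuple δ n).filter (fun f => ∀ i, 1 ≤ f i),
        algebraMap ℝ K (β ^ n / ∏ i, ((f i).factorial : ℝ)) *
        ((∏ i : Fin s, rho r u (f (Fin.castLE hs i))) *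
          ∏ j ∈ Finset.univ.filter (fun j : Fin δ => s ≤ (j : ℕ)), algebraMap ℝ K (b (f j))) := by
  have hb0 : b 0 = 0 := by rw [h.1]; simp
  rw [← prod_split_const δ s hs, coeff_prod_fin, Finset.sum_filter]
  refine Finset.sum_congr rfl fun f hf => ?_
  rw [Finset.Nat.mem_antidiagonalTuple] at hf
  split_ifs with h1
  · rw [← prod_split δ s hs (fun i => rho r u (f i)) (fun i => algebraMap ℝ K (b (f i)))]
    have : algebraMap ℝ K (β ^ n / ∏ i, ((f i).factorial : ℝ))
        = ∏ i, algebraMap ℝ K (β ^ f i / ((f i).factorial : ℝ)) := by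
      rw [← map_prod, Finset.prod_div_distrib, Finset.prod_pow_eq_pow_sum, hf]
    rw [this, ← Finset.prod_mul_distrib]
    refine Finset.prod_congr rfl fun i _ => ?_
    split_ifs <;> simp [Rs, Bs]
  · push Not at h1
    obtain ⟨i, hi⟩ := h1
    have hi0 : f i = 0 := by omega
    apply Finset.prod_eq_zero (Finset.mem_univ i)
    split_ifs <;> simp [Rs, Bs, hi0, hb0, rho]

lemma Rs_ode {p a β : ℝ} {φ : ℕ → ℝ} {r : ℕ → ℕ → ℝ} {b : ℕ → ℝ} (h : clusterRec p φ r b)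
    (hφ : ∀ δ, φ δ / (δ.factorial : ℝ) = c a δ) (u : K) :
    d⁄dX K (Rs r β u) = cc K β * (PowerSeries.C u * Q a (cc K p * Rs r β u + cc K (1-p) * Bs K b β)) := by
  have hr := support h
  have hb0 : b 0 = 0 := by rw [h.1]; simp
  ext n
  have hW : constantCoeff (cc K p * Rs r β u + cc K (1-p) * Bs K b β) = 0 := by
    have : constantCoeff (Bs K b β) = 0 := by
      rw [← coeff_zero_eq_constantCoeff_apply]; simp [Bs, hb0]
    simp [Rs_const, this]
  rw [coeff_cc_mul, coeff_C_mul, coeff_Q a hW n (n+1) (by omega), coeff_derivative]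
  have hl : coeff (n+1) (Rs r β u) * ((n:K)+1) = algebraMap ℝ K (β^(n+1) / n.factorial) *
      ∑ k ∈ Finset.range (n+1), u ^ (k+1) * algebraMap ℝ K (r (n+1) (k+1)) := by
    have e1 : rho r u (n+1) = ∑ k ∈ Finset.range (n+1), u ^ (k+1) * algebraMap ℝ K (r (n+1) (k+1)) := by
      unfold rho
      rw [Finset.range_eq_Ico, Finset.sum_Ico_add' (fun k => u ^ k * algebraMap ℝ K (r (n+1) k)) 0 (n+1) 1]
      refine Finset.sum_congr ?_ fun k _ => by ring
      ext k; simp [Nat.succ_le_iff]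
    have e2 : β^(n+1) / n.factorial = β^(n+1) / (n+1).factorial * ((n:ℝ)+1) := by
      rw [Nat.factorial_succ]; push_cast
      have : (n.factorial:ℝ) ≠ 0 := by positivity
      have : (n:ℝ)+1 ≠ 0 := by positivity
      field_simp
    rw [← e1, e2, map_mul]
    simp [Rs]; ring
  rw [hl]
  have hmain : ∀ δ, coeff n ((cc K p * Rs r β u + cc K (1-p) * Bs K b β)^δ) =
     ∑ s ∈ (Finset.range (δ + 1)).attach, algebraMap ℝ K ((δ.choose s.1 : ℝ) * (p ^ s.1 * (1 - p) ^ (δ - s.1))) *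
      ∑ f ∈ (Finset.Nat.antidiagonalTuple δ n).filter (fun f => ∀ i, 1 ≤ f i),
        algebraMap ℝ K (β ^ n / ∏ i, ((f i).factorial : ℝ)) *
        ((∑ k ∈ Finset.range (n+1),
      u ^ k * ∑ g ∈ (Finset.Nat.antidiagonalTuple s.1 k).filter (fun g => ∀ i, 1 ≤ g i),
        ∏ i, algebraMap ℝ K (r (f (Fin.castLE (Nat.lt_succ_iff.mp (Finset.mem_range.mp s.2)) i)) (g i))) *
          ∏ j ∈ Finset.univ.filter (fun j : Fin δ => s.1 ≤ (j : ℕ)), algebraMap ℝ K (b (f j))) := by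
    intro δ
    rw [add_pow, map_sum, ← Finset.sum_attach]
    refine Finset.sum_congr rfl fun s _ => ?_
    have hs := Nat.lt_succ_iff.mp (Finset.mem_range.mp s.2)
    have e3 : (cc K p * Rs r β u) ^ s.1 * (cc K (1-p) * Bs K b β)^(δ - s.1) * (δ.choose s.1 : K⟦X⟧)
        = cc K ((δ.choose s.1 : ℝ) * (p ^ s.1 * (1 - p) ^ (δ - s.1))) * (Rs r β u ^ s.1 * Bs K b β ^ (δ - s.1)) := by
      rw [mul_pow, mul_pow]
      simp only [cc, map_mul, map_pow, map_natCast]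
      ring
    rw [e3, coeff_cc_mul, coeff_RB h β u δ s.1 n hs]
    congr 1
    refine Finset.sum_congr rfl fun f hf => ?_
    rw [Finset.mem_filter, Finset.Nat.mem_antidiagonalTuple] at hf
    rw [prod_rho hr u s.1 n]
    · rw [← hf.1]; exact sum_castLE _ _ _ _
    · intro i; exact hf.2 _
  simp_rw [hmain]
  have hrr : ∀ k, r (n+1) (k+1) = _ := fun k => h.2 (n+1) (k+1) (by omega) (by omega)
  simp_rw [hrr, hφ]
  simp only [add_tsub_cancel_right, Finset.mul_sum, Finset.sum_mul, map_sum]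
  rw [Finset.sum_comm]
  refine Finset.sum_congr rfl fun δ _ => ?_
  rw [Finset.sum_comm]
  refine Finset.sum_congr rfl fun s _ => ?_
  rw [Finset.sum_comm]
  refine Finset.sum_congr rfl fun f _ => ?_
  refine Finset.sum_congr rfl fun k _ => ?_
  refine Finset.sum_congr rfl fun g _ => ?_
  have e4 : (β^(n+1) / (n.factorial:ℝ)) * ((n.factorial:ℝ) / ∏ i, ((f i).factorial : ℝ))
      = β * (β ^ n / ∏ i, ((f i).factorial : ℝ)) := by
    have : (n.factorial:ℝ) ≠ 0 := by positivity
    have : (∏ i, ((f i).factorial : ℝ)) ≠ 0 := by positivity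
    field_simp
    ring
  have e5 := congrArg (algebraMap ℝ K) e4
  simp only [map_mul, map_prod] at e5 ⊢
  linear_combination (u^(k+1) * (algebraMap ℝ K (δ.choose s.1)) * algebraMap ℝ K (c a δ) *
    (algebraMap ℝ K (p^s.1) * algebraMap ℝ K ((1-p)^(δ - s.1))) *
    (∏ i, algebraMap ℝ K (r (f (Fin.castLE (Nat.lt_succ_iff.mp (Finset.mem_range.mp s.2)) i)) (g i))) *
    ∏ j ∈ Finset.univ.filter (fun j : Fin δ => s.1 ≤ (j : ℕ)), algebraMap ℝ K (b (f j))) * e5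

end recn

section asy
open Topology

lemma c_asymp (s : ℝ) (hs : Real.Gamma s ≠ 0) :
    Tendsto (fun n : ℕ => c s n * (n:ℝ) ^ (1 - s)) atTop (𝓝 (1 / Real.Gamma s)) := by
  have h1 := (Real.GammaSeq_tendsto_Gamma s).inv₀ hs
  have h2 : Tendsto (fun n : ℕ => (n:ℝ) / (n + s)) atTop (𝓝 1) := tendsto_natCast_div_add_atTop s
  have h3 := h1.mul h2
  rw [mul_one, ← one_div] at h3
  refine h3.congr' ?_
  have hne : ∀ᶠ n : ℕ in atTop, (n:ℝ) > -s := tendsto_natCast_atTop_atTop.eventually_gt_atTop (-s)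
  filter_upwards [hne, eventually_gt_atTop 0] with n hn hn0
  have hn1 : (0:ℝ) < n := by exact_mod_cast hn0
  have hsn : s + n ≠ 0 := by linarith
  have hsn' : (n:ℝ) + s ≠ 0 := by linarith
  unfold Real.GammaSeq c
  rw [Finset.prod_range_succ, Real.rpow_sub hn1, Real.rpow_one, inv_div]
  have : (n:ℝ)^s ≠ 0 := (Real.rpow_pos_of_pos hn1 s).ne'
  have : (n.factorial:ℝ) ≠ 0 := by positivity
  rw [add_comm (n:ℝ) s]
  field_simp

/-- `[x^n] f ~ L * [x^n] (1-x)^{-γ}` -/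
def Asy (f : ℝ⟦X⟧) (γ L : ℝ) : Prop := Tendsto (fun n => coeff n f / c γ n) atTop (𝓝 L)

lemma c_ratio {γ δ : ℝ} (hγ : Real.Gamma γ ≠ 0) (hδ : 0 < δ) (h : γ < δ) :
    Tendsto (fun n => c γ n / c δ n) atTop (𝓝 0) := by
  have hδ' := (Real.Gamma_pos_of_pos hδ).ne'
  have h1 := (c_asymp γ hγ).div (c_asymp δ hδ') (by positivity)
  have h2 : Tendsto (fun n : ℕ => (n:ℝ) ^ (-(δ - γ))) atTop (𝓝 0) :=
    (tendsto_rpow_neg_atTop (sub_pos.mpr h)).comp tendsto_natCast_atTop_atTop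
  have h3 := h1.mul h2
  rw [mul_zero] at h3
  refine h3.congr' ?_
  filter_upwards [eventually_gt_atTop 0] with n hn0
  have hn1 : (0:ℝ) < n := by exact_mod_cast hn0
  have e : (n:ℝ) ^ (1 - δ) = (n:ℝ) ^ (1 - γ) * (n:ℝ) ^ (-(δ - γ)) := by
    rw [← Real.rpow_add hn1]; congr 1; ring
  simp only [Pi.div_apply]
  rw [e]
  have : (n:ℝ)^(1-γ) ≠ 0 := (Real.rpow_pos_of_pos hn1 _).ne'
  have : (n:ℝ)^(-(δ-γ)) ≠ 0 := (Real.rpow_pos_of_pos hn1 _).ne'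
  have := (c_pos hδ n).ne'
  field_simp

lemma coeff_P' (s : ℝ) (n : ℕ) : coeff n (P ℝ s) = c s n := by simp

lemma asy_P {γ : ℝ} (hγ : 0 < γ) : Asy (P ℝ γ) γ 1 := by
  unfold Asy
  refine tendsto_const_nhds.congr fun n => ?_
  rw [coeff_P', div_self (c_pos hγ n).ne']

lemma asy_P_lower {γ δ : ℝ} (hγ : Real.Gamma γ ≠ 0) (hδ : 0 < δ) (h : γ < δ) :
    Asy (P ℝ γ) δ 0 := by
  unfold Asy
  simp_rw [coeff_P']
  exact c_ratio hγ hδ h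

lemma asy_lower {f : ℝ⟦X⟧} {γ δ L : ℝ} (hf : Asy f γ L) (hγ : 0 < γ) (h : γ < δ) : Asy f δ 0 := by
  have := hf.mul (c_ratio (Real.Gamma_pos_of_pos hγ).ne' (hγ.trans h) h)
  rw [mul_zero] at this
  refine this.congr fun n => ?_
  have := (c_pos hγ n).ne'
  field_simp

lemma asy_zero (γ : ℝ) : Asy 0 γ 0 := by unfold Asy; simp

lemma asy_add {f g : ℝ⟦X⟧} {γ L M : ℝ} (hf : Asy f γ L) (hg : Asy g γ M) : Asy (f + g) γ (L + M) := by
  refine (Tendsto.add hf hg).congr fun n => ?_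
  rw [map_add, add_div]

lemma asy_cmul {f : ℝ⟦X⟧} {γ L : ℝ} (s : ℝ) (hf : Asy f γ L) : Asy (cc ℝ s * f) γ (s * L) := by
  refine (Tendsto.const_mul s hf).congr fun n => ?_
  rw [coeff_cc_mul, mul_div_assoc]; rfl

lemma asy_sum {ι : Type*} (S : Finset ι) (f : ι → ℝ⟦X⟧) (γ : ℝ) (L : ι → ℝ)
    (hf : ∀ i ∈ S, Asy (f i) γ (L i)) : Asy (∑ i ∈ S, f i) γ (∑ i ∈ S, L i) := by
  classical
  induction S using Finset.induction_on with
  | empty => simpa using asy_zero γ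
  | insert a S ha ih =>
    rw [Finset.sum_insert ha, Finset.sum_insert ha]
    exact asy_add (hf a (by simp)) (ih fun i hi => hf i (by simp [hi]))

lemma asy_X {f : ℝ⟦X⟧} {γ L : ℝ} (hγ : 0 < γ) (hf : Asy f γ L) : Asy (X * f) γ L := by
  unfold Asy
  rw [← tendsto_add_atTop_iff_nat 1]
  have h2 : Tendsto (fun n : ℕ => ((n:ℝ)+1) / (n + γ)) atTop (𝓝 1) := by
    have := tendsto_add_mul_div_add_mul_atTop_nhds (1:ℝ) γ 1 (d := 1) one_ne_zero
    simp at this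
    refine this.congr fun n => ?_
    rw [add_comm, add_comm (n:ℝ) γ]
  have h3 := Tendsto.mul hf h2
  rw [mul_one] at h3
  refine h3.congr fun n => ?_
  rw [coeff_succ_X_mul]
  have e := c_succ γ n
  have h4 := (c_pos hγ n).ne'
  have h5 := (c_pos hγ (n+1)).ne'
  have h6 : (n:ℝ) + γ ≠ 0 := by positivity
  rw [div_mul_div_comm, div_eq_div_iff (by positivity) h5]
  linear_combination (coeff n f) * e

lemma asy_X_pow {f : ℝ⟦X⟧} {γ L : ℝ} (hγ : 0 < γ) (hf : Asy f γ L) (i : ℕ) : Asy (X^i * f) γ L := by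
  induction i with
  | zero => simpa using hf
  | succ i ih => rw [pow_succ', mul_assoc]; exact asy_X hγ ih

lemma conv_o {f g : ℝ⟦X⟧} {γ δ K : ℝ} (hγ : 0 < γ) (hδ : 0 < δ) (hf : Asy f γ 0) (hK : 0 ≤ K)
    (hg : ∀ n, |coeff n g| ≤ K * c δ n) : Asy (f * g) (γ + δ) 0 := by
  unfold Asy
  rw [Metric.tendsto_atTop']
  intro ε hε
  set ε' := ε / (2 * (K + 1)) with hε'
  have hε'0 : 0 < ε' := by positivity
  obtain ⟨N, hN⟩ := (Metric.tendsto_atTop.mp hf) ε' hε'0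
  set q : ℝ⟦X⟧ := ∑ i ∈ Finset.range N, cc ℝ |coeff i f| * X ^ i with hq
  have hqc : ∀ i, coeff i q = if i < N then |coeff i f| else 0 := by
    intro i
    simp [hq, coeff_X_pow]
  have hbd : ∀ i, |coeff i f| ≤ ε' * c γ i + coeff i q := by
    intro i
    have hc := c_pos hγ i
    rw [hqc]
    split_ifs with h
    · have : 0 < ε' * c γ i := by positivity
      linarith
    · have := hN i (not_lt.mp h)
      rw [Real.dist_eq, sub_zero, abs_div, abs_of_pos hc, div_lt_iff₀ hc] at this
      linarith
  have hqP : Asy (q * P ℝ δ) (γ + δ) 0 := by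
    have : q * P ℝ δ = ∑ i ∈ Finset.range N, cc ℝ |coeff i f| * (X ^ i * P ℝ δ) := by
      rw [hq, Finset.sum_mul]; exact Finset.sum_congr rfl fun i _ => by ring
    rw [this]
    have h := asy_sum (Finset.range N) (fun i => cc ℝ |coeff i f| * (X ^ i * P ℝ δ)) (γ + δ)
      (fun i => |coeff i f| * 0) fun i _ => asy_cmul _ (asy_lower (asy_X_pow hδ (asy_P hδ) i) hδ (by linarith))
    simpa using h
  have hev : ∀ᶠ n in atTop, coeff n (q * P ℝ δ) / c (γ+δ) n < ε' := by
    exact (tendsto_order.mp hqP).2 _ hε'0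
  obtain ⟨M, hM⟩ := eventually_atTop.mp hev
  refine ⟨M, fun n hn => ?_⟩
  have hc := c_pos (add_pos hγ hδ) n
  have h1 := hM n (le_of_lt hn)
  rw [div_lt_iff₀ hc] at h1
  rw [Real.dist_eq, sub_zero, abs_div, abs_of_pos hc, div_lt_iff₀ hc]
  have h2 : |coeff n (f * g)| ≤ K * (ε' * c (γ+δ) n + coeff n (q * P ℝ δ)) := by
    have e1 : ε' * c (γ+δ) n + coeff n (q * P ℝ δ) = coeff n ((cc ℝ ε' * P ℝ γ + q) * P ℝ δ) := by
      rw [add_mul, map_add, mul_assoc, P_mul, coeff_cc_mul, coeff_P']; rfl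
    rw [e1, coeff_mul, coeff_mul, Finset.mul_sum]
    refine (Finset.abs_sum_le_sum_abs _ _).trans (Finset.sum_le_sum fun x _ => ?_)
    rw [abs_mul, coeff_P', map_add, coeff_cc_mul, coeff_P']
    have h3 := hbd x.1
    have h4 := hg x.2
    have h5 := mul_le_mul h3 h4 (abs_nonneg _) (le_trans (abs_nonneg _) h3)
    simp only [Algebra.algebraMap_self, RingHom.id_apply]
    linarith
  have h3 : K * (ε' * c (γ+δ) n + coeff n (q * P ℝ δ)) ≤ K * (2 * ε' * c (γ+δ) n) :=
    mul_le_mul_of_nonneg_left (by linarith) hK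
  have h4 : K * (2 * ε' * c (γ+δ) n) = (K / (K+1)) * (ε * c (γ+δ) n) := by
    rw [hε']; field_simp
  have h5 : K / (K+1) < 1 := by rw [div_lt_one (by positivity)]; linarith
  have h6 : 0 < ε * c (γ+δ) n := by positivity
  nlinarith

lemma asy_bdd {g : ℝ⟦X⟧} {δ B : ℝ} (hδ : 0 < δ) (hg : Asy g δ B) :
    ∃ K, 0 ≤ K ∧ ∀ n, |coeff n g| ≤ K * c δ n := by
  obtain ⟨K, hK⟩ := (Tendsto.abs hg).bddAbove_range
  have hK' : ∀ n, |coeff n g / c δ n| ≤ K := fun n => hK ⟨n, rfl⟩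
  refine ⟨K, (abs_nonneg _).trans (hK' 0), fun n => ?_⟩
  have := hK' n
  have hc := c_pos hδ n
  rwa [abs_div, abs_of_pos hc, div_le_iff₀ hc] at this

lemma asy_mul {f g : ℝ⟦X⟧} {γ δ A B : ℝ} (hγ : 0 < γ) (hδ : 0 < δ) (hf : Asy f γ A)
    (hg : Asy g δ B) : Asy (f * g) (γ + δ) (A * B) := by
  have hf0 : Asy (f + cc ℝ (-A) * P ℝ γ) γ 0 := by
    simpa using asy_add hf (asy_cmul (-A) (asy_P hγ))
  have hg0 : Asy (g + cc ℝ (-B) * P ℝ δ) δ 0 := by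
    simpa using asy_add hg (asy_cmul (-B) (asy_P hδ))
  obtain ⟨K, hK, hKg⟩ := asy_bdd hδ hg
  obtain ⟨K', hK', hKP⟩ := asy_bdd hγ (asy_P hγ)
  have h1 := conv_o hγ hδ hf0 hK hKg
  have h2 := conv_o hδ hγ hg0 hK' hKP
  rw [add_comm δ γ] at h2
  have h3 := asy_add (asy_add h1 (asy_cmul A h2)) (asy_cmul (A * B) (asy_P (add_pos hγ hδ)))
  have e : f * g = (f + cc ℝ (-A) * P ℝ γ) * g + cc ℝ A * ((g + cc ℝ (-B) * P ℝ δ) * P ℝ γ)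
      + cc ℝ (A * B) * P ℝ (γ + δ) := by
    rw [← P_mul]; simp only [cc_neg, cc_mul]; ring
  rw [e]
  simpa using h3

lemma asy_ode {f g : ℝ⟦X⟧} {e γ G : ℝ} (he : 0 < e) (hγ : e < γ)
    (h : (1 - X) * d⁄dX ℝ f = cc ℝ e * f + g) (hg : Asy g γ G) : Asy f γ (G / (γ - e)) := by
  have hγ0 : 0 < γ := he.trans hγ
  have hγe : 0 < γ - e := sub_pos.mpr hγ
  have hrec : ∀ n, coeff (n+1) f * ((n:ℝ)+1) = (e + n) * coeff n f + coeff n g := by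
    intro n
    have h1 := congrArg (coeff n) h
    rw [sub_mul, one_mul, map_sub, map_add, coeff_cc_mul, coeff_derivative] at h1
    simp only [Algebra.algebraMap_self, RingHom.id_apply] at h1
    rcases n with _ | n
    · simp at h1 ⊢; linarith
    · rw [coeff_succ_X_mul, coeff_derivative] at h1
      push_cast at h1 ⊢
      linarith
  set q : ℕ → ℝ := fun n => coeff n f / c e n with hq
  set T : ℕ → ℝ := fun n => c γ n / c e n with hT
  set L := G / (γ - e) with hL
  have hT0 : ∀ n, 0 < T n := fun n => div_pos (c_pos hγ0 n) (c_pos he n)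
  have hTd : ∀ n, T (n+1) - T n = (γ - e) * c γ n / (((n:ℝ)+1) * c e (n+1)) := by
    intro n
    have e1 := c_succ γ n
    have e2 := c_succ e n
    have h1 := (c_pos he n).ne'
    have h2 := (c_pos he (n+1)).ne'
    have h3 : (n:ℝ)+1 ≠ 0 := by positivity
    simp only [hT]
    rw [div_sub_div _ _ h2 h1, div_eq_div_iff (by positivity) (by positivity)]
    linear_combination (c e (n+1) * c e n) * e1 - (c e (n+1) * c γ n) * e2
  have hqd : ∀ n, q (n+1) - q n = coeff n g / (((n:ℝ)+1) * c e (n+1)) := by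
    intro n
    have e1 := hrec n
    have e2 := c_succ e n
    have h1 := (c_pos he n).ne'
    have h2 := (c_pos he (n+1)).ne'
    have h3 : (n:ℝ)+1 ≠ 0 := by positivity
    simp only [hq]
    rw [div_sub_div _ _ h2 h1, div_eq_div_iff (by positivity) (by positivity)]
    linear_combination (c e (n+1) * c e n) * e1 - (c e (n+1) * coeff n f) * e2
  have hTpos : ∀ n, 0 < T (n+1) - T n := by
    intro n; rw [hTd]
    have h1 := c_pos he (n+1)
    have h2 := c_pos hγ0 n
    positivity
  have hTtop : Tendsto T atTop atTop := by
    have h1 := c_ratio (Real.Gamma_pos_of_pos he).ne' hγ0 hγ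
    have h2 : Tendsto (fun n => c e n / c γ n) atTop (𝓝[>] 0) :=
      tendsto_nhdsWithin_iff.mpr ⟨h1, Eventually.of_forall fun n => div_pos (c_pos he n) (c_pos hγ0 n)⟩
    refine (tendsto_inv_nhdsGT_zero.comp h2).congr fun n => ?_
    simp [hT]
  have hlo : (fun n => (q (n+1) - q n) - L * (T (n+1) - T n)) =o[atTop] (fun n => T (n+1) - T n) := by
    rw [isLittleO_iff_tendsto (fun n hn => absurd hn (hTpos n).ne')]
    have h1 : Tendsto (fun n => coeff n g / c γ n / (γ - e) - L) atTop (𝓝 0) := by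
      have := (Tendsto.div_const hg (γ - e)).sub_const L
      rwa [← hL, sub_self] at this
    refine h1.congr fun n => ?_
    rw [sub_div, mul_div_assoc, div_self (hTpos n).ne', hqd, hTd]
    have h1 := c_pos he (n+1)
    have h2 := c_pos hγ0 n
    field_simp
  have hsum := hlo.sum_range (fun n => (hTpos n).le) (by
    simp_rw [Finset.sum_range_sub]
    exact tendsto_atTop_add_const_right _ _ hTtop)
  have hsum2 : (fun n => (q n - q 0) - L * (T n - T 0)) =o[atTop] T := by
    have hO : (fun n => T n - T 0) =O[atTop] T := by
      refine IsBigO.of_bound 1 (Eventually.of_forall fun n => ?_)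
      have hmono : Monotone T := monotone_nat_of_le_succ fun n => by linarith [hTpos n]
      have := hmono (Nat.zero_le n)
      rw [one_mul, Real.norm_of_nonneg (hT0 n).le, Real.norm_of_nonneg (by linarith)]
      linarith [hT0 0]
    have hsum' := hsum.congr (f₂ := fun n => (q n - q 0) - L * (T n - T 0)) (g₂ := fun n => T n - T 0)
      (fun n => by rw [Finset.sum_sub_distrib, ← Finset.mul_sum, Finset.sum_range_sub, Finset.sum_range_sub])
      (fun n => by rw [Finset.sum_range_sub])
    exact hsum'.trans_isBigO hO
  have h1 := hsum2.tendsto_div_nhds_zero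
  have h2 : Tendsto (fun n => (q 0 - L * T 0) / T n) atTop (𝓝 0) := hTtop.const_div_atTop _
  have h3 := (h1.add h2).add_const L
  rw [add_zero, zero_add] at h3
  refine h3.congr fun n => ?_
  have h4 := (hT0 n).ne'
  have h5 : coeff n f / c γ n = q n / T n := by
    simp only [hq, hT]
    have h1 := (c_pos he n).ne'
    have h2 := (c_pos hγ0 n).ne'
    field_simp
  rw [h5]
  field_simp
  ring

end asy

section bell

/-- exponential generating function -/
def egf (x : ℕ → ℝ) : ℝ⟦X⟧ := PowerSeries.mk fun i => if i = 0 then 0 else x i / (i.factorial : ℝ)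

lemma bell (x : ℕ → ℝ) (k j : ℕ) (hj : 1 ≤ j) (hjk : j ≤ k) :
    coeff k (egf x ^ j) * (k.factorial : ℝ) = (j.factorial : ℝ) * bellPartial k j x := by
  classical
  set L := k - j + 1 with hL
  set sL : ℝ⟦X⟧ := ∑ i : Fin L, PowerSeries.C (x ((i:ℕ)+1) / (((i:ℕ)+1).factorial : ℝ)) * X ^ ((i:ℕ)+1) with hsL
  have hX : (X:ℝ⟦X⟧) ∣ egf x := by rw [X_dvd_iff, ← coeff_zero_eq_constantCoeff_apply]; simp [egf]
  have hXL : (X:ℝ⟦X⟧) ∣ sL := Finset.dvd_sum fun i _ => Dvd.dvd.mul_left (dvd_pow_self _ (by omega)) _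
  have hd : (X:ℝ⟦X⟧)^(L+1) ∣ egf x - sL := by
    rw [X_pow_dvd_iff]
    intro m hm
    rw [map_sub, sub_eq_zero, hsL, map_sum]
    simp only [coeff_C_mul, coeff_X_pow, egf, coeff_mk]
    rcases m with _ | m
    · simp
    · rw [Finset.sum_eq_single (⟨m, by omega⟩ : Fin L)]
      · simp
      · intro i _ hi
        rw [if_neg, mul_zero]
        intro h; apply hi; ext; simp; omega
      · simp
  have hd2 : (X:ℝ⟦X⟧)^(k+1) ∣ egf x ^ j - sL ^ j := by
    have h1 : (X:ℝ⟦X⟧)^(j-1) ∣ ∑ i ∈ Finset.range j, egf x ^ i * sL ^ (j - 1 - i) := by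
      refine Finset.dvd_sum fun i hi => ?_
      rw [Finset.mem_range] at hi
      have : (X:ℝ⟦X⟧)^(j-1) = X^i * X^(j-1-i) := by rw [← pow_add]; congr 1; omega
      rw [this]
      exact mul_dvd_mul (pow_dvd_pow_of_dvd hX i) (pow_dvd_pow_of_dvd hXL _)
    rw [← Commute.geom_sum₂_mul (Commute.all _ _)]
    have : (X:ℝ⟦X⟧)^(k+1) = X^(j-1) * X^(L+1) := by rw [← pow_add]; congr 1; omega
    rw [this]
    exact mul_dvd_mul h1 hd
  have e1 : coeff k (egf x ^ j) = coeff k (sL ^ j) := by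
    have := X_pow_dvd_iff.mp hd2 k (by omega)
    rwa [map_sub, sub_eq_zero] at this
  rw [e1, hsL, Finset.sum_pow_eq_sum_piAntidiag, map_sum, Finset.sum_mul, bellPartial, Finset.mul_sum]
  have e2 : ∀ m : Fin L → ℕ, coeff k ((Nat.multinomial Finset.univ m : ℝ⟦X⟧) *
      ∏ i : Fin L, (PowerSeries.C (x ((i:ℕ)+1) / (((i:ℕ)+1).factorial : ℝ)) * X ^ ((i:ℕ)+1)) ^ m i)
      = if (∑ i : Fin L, ((i:ℕ)+1) * m i) = k then (Nat.multinomial Finset.univ m : ℝ) *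
        ∏ i : Fin L, (x ((i:ℕ)+1) / (((i:ℕ)+1).factorial : ℝ)) ^ m i else 0 := by
    intro m
    simp_rw [mul_pow]
    rw [Finset.prod_mul_distrib]
    simp_rw [← pow_mul, ← map_pow]
    rw [Finset.prod_pow_eq_pow_sum, ← map_prod]
    have : (Nat.multinomial Finset.univ m : ℝ⟦X⟧) = PowerSeries.C (Nat.multinomial Finset.univ m : ℝ) := by simp
    rw [this, coeff_C_mul, coeff_C_mul, coeff_X_pow]
    by_cases h : (∑ i : Fin L, ((i:ℕ)+1) * m i) = k
    · simp [h]
    · rw [if_neg h, if_neg (Ne.symm h)]; simp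
  simp_rw [e2, ite_mul, zero_mul]
  rw [← Finset.sum_filter]
  refine Finset.sum_congr ?_ ?_
  · ext m
    simp only [Finset.mem_filter, Finset.mem_piAntidiag, Fintype.mem_piFinset, Finset.mem_range]
    constructor
    · rintro ⟨⟨h1, _⟩, h2⟩
      refine ⟨fun i => ?_, h2, h1⟩
      have : m i ≤ ∑ i, m i := Finset.single_le_sum (fun _ _ => Nat.zero_le _) (Finset.mem_univ i)
      rw [show ∑ i, m i = j from h1] at this
      omega
    · rintro ⟨_, h2, h1⟩
      exact ⟨⟨h1, by simp⟩, h2⟩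
  · intro m hm
    simp only [Finset.mem_filter] at hm
    have hmul : (Nat.multinomial Finset.univ m : ℝ) * ∏ i, ((m i).factorial : ℝ) = j.factorial := by
      have := Nat.multinomial_spec Finset.univ m
      rw [hm.2.2] at this
      rw [← this]; push_cast; ring
    have hne : (∏ i, ((m i).factorial : ℝ)) ≠ 0 := by positivity
    have e3 : ∏ i : Fin L, x ((i : ℕ) + 1) ^ m i / (((m i).factorial : ℝ) * (((i : ℕ) + 1).factorial : ℝ) ^ m i)
       = (∏ i : Fin L, (x ((i:ℕ)+1) / (((i:ℕ)+1).factorial : ℝ)) ^ m i) / ∏ i, ((m i).factorial : ℝ) := by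
      rw [← Finset.prod_div_distrib]
      refine Finset.prod_congr rfl fun i _ => ?_
      rw [div_pow, div_div, mul_comm]
    rw [e3, ← hmul]
    field_simp

end bell

section ext

/-- coefficient of `t^k`, as a series in `x` -/
def T (k : ℕ) (f : ℝ⟦X⟧⟦X⟧) : ℝ⟦X⟧ := PowerSeries.mk fun n => coeff k (coeff n f)

@[simp] lemma coeff_T (k n : ℕ) (f : ℝ⟦X⟧⟦X⟧) : coeff n (T k f) = coeff k (coeff n f) := by simp [T]

/-- embedding -/
def emb (f : ℝ⟦X⟧) : ℝ⟦X⟧⟦X⟧ := PowerSeries.map (algebraMap ℝ ℝ⟦X⟧) f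

lemma algMap_eq (s : ℝ) : algebraMap ℝ ℝ⟦X⟧ s = PowerSeries.C s := rfl

lemma T_sub (k : ℕ) (f g : ℝ⟦X⟧⟦X⟧) : T k (f - g) = T k f - T k g := by ext n; simp

lemma T_deriv (k : ℕ) (f : ℝ⟦X⟧⟦X⟧) : T k (d⁄dX ℝ⟦X⟧ f) = d⁄dX ℝ (T k f) := by
  ext n
  rw [coeff_T, coeff_derivative, coeff_derivative, coeff_T]
  have : ((n:ℝ⟦X⟧) + 1) = PowerSeries.C ((n:ℝ)+1) := by simp
  rw [this, coeff_mul_C]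

lemma T_mul (k : ℕ) (f g : ℝ⟦X⟧⟦X⟧) :
    T k (f * g) = ∑ x ∈ Finset.HasAntidiagonal.antidiagonal k, T x.1 f * T x.2 g := by
  ext n
  rw [coeff_T, coeff_mul, map_sum, map_sum]
  simp_rw [coeff_mul, coeff_T]
  rw [Finset.sum_comm]

lemma T_emb (k : ℕ) (g : ℝ⟦X⟧) (f : ℝ⟦X⟧⟦X⟧) : T k (emb g * f) = g * T k f := by
  ext n
  rw [coeff_T, coeff_mul, coeff_mul, map_sum]
  refine Finset.sum_congr rfl fun x _ => ?_
  rw [coeff_T, emb, coeff_map, algMap_eq, coeff_C_mul]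

lemma T_emb' (k : ℕ) (hk : 1 ≤ k) (g : ℝ⟦X⟧) : T k (emb g) = 0 := by
  ext n
  rw [coeff_T, emb, coeff_map, algMap_eq, coeff_C, if_neg (by omega)]
  simp

lemma T_zero_emb (g : ℝ⟦X⟧) : T 0 (emb g) = g := by
  ext n
  rw [coeff_T, emb, coeff_map, algMap_eq, coeff_C, if_pos rfl]

lemma emb_P (s : ℝ) : P ℝ⟦X⟧ s = emb (P ℝ s) := by
  ext n; simp [emb]

lemma emb_cc (s : ℝ) : cc ℝ⟦X⟧ s = emb (cc ℝ s) := by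
  simp [emb, cc]

lemma emb_one : emb 1 = 1 := by simp [emb]

lemma emb_X : (1 - X : ℝ⟦X⟧⟦X⟧) = emb (1 - X) := by simp [emb]

lemma T_C (k : ℕ) (u : ℝ⟦X⟧) (f : ℝ⟦X⟧⟦X⟧) :
    T k (f * PowerSeries.C u) = ∑ m ∈ Finset.range (k+1), cc ℝ (coeff (k - m) u) * T m f := by
  rw [T_mul, Finset.Nat.sum_antidiagonal_eq_sum_range_succ_mk]
  refine Finset.sum_congr rfl fun m _ => ?_
  have : T (k - m) (PowerSeries.C u) = cc ℝ (coeff (k-m) u) := by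
    ext n
    simp only [coeff_T, cc, coeff_C, Algebra.algebraMap_self, RingHom.id_apply]
    split_ifs <;> simp
  rw [this, mul_comm]

lemma T_pow_zero {V : ℝ⟦X⟧⟦X⟧} (hV : T 0 V = 0) (j : ℕ) : ∀ m < j, T m (V ^ j) = 0 := by
  induction j with
  | zero => intro m hm; omega
  | succ j ih =>
    intro m hm
    rw [pow_succ, T_mul]
    refine Finset.sum_eq_zero fun x hx => ?_
    rw [Finset.HasAntidiagonal.mem_antidiagonal] at hx
    rcases Nat.eq_zero_or_pos x.2 with h | h
    · rw [h, hV, mul_zero]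
    · rw [ih x.1 (by omega), zero_mul]

lemma T_Q (a p : ℝ) {V : ℝ⟦X⟧⟦X⟧} (hV : T 0 V = 0) (hV0 : constantCoeff V = 0) (m : ℕ) :
    T m (Q a (cc ℝ⟦X⟧ p * V)) = ∑ j ∈ Finset.range (m+1), cc ℝ (c a j * p ^ j) * T m (V ^ j) := by
  ext n
  have hW : constantCoeff (cc ℝ⟦X⟧ p * V) = 0 := by simp [hV0]
  rw [coeff_T, coeff_Q a hW n (n + 1 + m) (by omega), map_sum, map_sum]
  have e : ∀ j, coeff m (algebraMap ℝ ℝ⟦X⟧ (c a j) * coeff n ((cc ℝ⟦X⟧ p * V) ^ j))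
      = coeff n (cc ℝ (c a j * p ^ j) * T m (V ^ j)) := by
    intro j
    have : (cc ℝ⟦X⟧ p * V) ^ j = cc ℝ⟦X⟧ (p ^ j) * V ^ j := by
      rw [mul_pow]; simp [cc]
    rw [this, coeff_cc_mul, coeff_cc_mul, algMap_eq, algMap_eq, coeff_C_mul, coeff_C_mul, coeff_T]
    simp [mul_assoc]
  simp_rw [e]
  symm
  apply Finset.sum_subset
  · intro j hj; rw [Finset.mem_range] at hj ⊢; omega
  · intro j _ hj
    rw [Finset.mem_range] at hj
    rw [T_pow_zero hV j m (by omega)]; simp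

lemma prod_asy {F G : ℝ⟦X⟧⟦X⟧} {f g : ℝ⟦X⟧} {N : ℕ} {θ σ : ℝ} (hθ : 0 < θ) (hσ : σ < θ)
    (hF0 : T 0 F = 0) (hG0 : T 0 G = 0) (hf0 : coeff 0 f = 0) (hg0 : coeff 0 g = 0)
    (hF : ∀ i, 1 ≤ i → i < N → Asy (T i F) (i * θ - σ) (coeff i f))
    (hG : ∀ i, 1 ≤ i → i < N → Asy (T i G) (i * θ) (coeff i g)) (m : ℕ) (hm : m ≤ N) :
    Asy (T m (F * G)) (m * θ - σ) (coeff m (f * g)) := by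
  rw [T_mul, coeff_mul]
  refine asy_sum _ _ _ _ fun x hx => ?_
  rw [Finset.HasAntidiagonal.mem_antidiagonal] at hx
  rcases Nat.eq_zero_or_pos x.1 with h1 | h1
  · rw [h1, hF0, hf0, zero_mul, zero_mul]; exact asy_zero _
  rcases Nat.eq_zero_or_pos x.2 with h2 | h2
  · rw [h2, hG0, hg0, mul_zero, mul_zero]; exact asy_zero _
  have h3 : (1:ℝ) ≤ x.1 := by exact_mod_cast h1
  have h4 : (1:ℝ) ≤ x.2 := by exact_mod_cast h2
  have e : (m:ℝ) * θ - σ = (x.1 * θ - σ) + x.2 * θ := by rw [← hx]; push_cast; ring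
  rw [e]
  exact asy_mul (by nlinarith) (by positivity) (hF _ h1 (by omega)) (hG _ h2 (by omega))

lemma B_eq {p a β : ℝ} {φ : ℕ → ℝ} {r : ℕ → ℕ → ℝ} {b : ℕ → ℝ} (h : clusterRec p φ r b)
    (hφ : ∀ δ, φ δ / (δ.factorial : ℝ) = c a δ) (hab : (a + 1) * β = 1) :
    Bs ℝ b β = 1 - P ℝ (-β) := by
  have hRB : Rs r β (1:ℝ) = Bs ℝ b β := by
    ext n; simp [Rs, Bs, rho, h.1]
  have h1 := Rs_ode (K := ℝ) (β := β) h hφ 1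
  rw [hRB] at h1
  set B := Bs ℝ b β with hB
  have hB0 : constantCoeff B = 0 := by rw [← hRB]; exact Rs_const _ _ _
  have e1 : cc ℝ p * B + cc ℝ (1-p) * B = B := by
    rw [← add_mul, ← cc_add]; simp
  rw [e1, map_one, one_mul] at h1
  have hF : Q (-(a+1)) B = 1 - X := by
    apply derivative.ext
    · rw [Q_deriv _ hB0, h1]
      have e2 : Q (-(a+1)+1) B * Q a B = 1 := by
        rw [Q_mul _ _ hB0]; rw [← Q_zero hB0]; congr 1; ring
      have e3 : cc ℝ (-(a+1)) * cc ℝ β = -1 := by rw [← cc_mul, neg_mul, hab]; simp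
      simp only [map_sub, derivative_X, Derivation.map_one_eq_zero]
      linear_combination (cc ℝ (-(a+1)) * cc ℝ β) * e2 + e3
    · simp [Q_const _ hB0]
  have e4 : Q (-(a+1)) B * Q a B = 1 - B := by
    rw [Q_mul _ _ hB0, ← Q_neg_one hB0]; congr 1; ring
  have hE : 1 - B = P ℝ (-β) := by
    apply uniq X (cc ℝ (-β))
    · simp
    · rw [← hF]
      simp only [map_sub, Derivation.map_one_eq_zero, h1, cc_neg]
      linear_combination (- cc ℝ β) * e4
    · exact P_ode _
    · simp [hB0]
  rw [← hE]; ring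

lemma S_ode {a p β : ℝ} (haβ : a * β = 1 - β) {K : Type*} [CommRing K] [Algebra ℝ K] {u : K} {R B S V : K⟦X⟧}
    (hR0 : constantCoeff R = 0)
    (hR : d⁄dX K R = cc K β * (PowerSeries.C u * Q a (cc K p * R + cc K (1-p) * B)))
    (hB : B = 1 - P K (-β)) (hS : S = R - B) (hV : V = P K β * S) :
    (1 - X) * d⁄dX K S = cc K β * ((P K (-β) * Q a (cc K p * V)) * PowerSeries.C u
      - P K (-β)) := by
  have hB0 : constantCoeff B = 0 := by simp [hB]
  have hV0 : constantCoeff V = 0 := by simp [hV, hS, hB0, hR0]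
  have hPP : P K (-β) * P K β = 1 := by rw [P_mul, neg_add_cancel, P_zero]
  set W := cc K p * R + cc K (1-p) * B with hWdef
  have hW0 : constantCoeff W = 0 := by simp [hWdef, hB0, hR0]
  have hpp : cc K (1-p) = 1 - cc K p := by rw [sub_eq_add_neg, cc_add, cc_neg, cc_one]; ring
  set v := cc K p * V with hv
  have hv0 : constantCoeff v = 0 := by simp [hv, hV0]
  have hW : W = 1 - P K (-β) * (1 - v) := by
    rw [hWdef, hv, hV, hS, hpp]
    linear_combination hB - (cc K p * (R - B)) * hPP
  have hQ : Q a W = P K (a*β) * Q a v := by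
    apply uniq W (cc K a * d⁄dX K W) _ _ hW0 (Q_ode a hW0)
    · have h1 := Q_ode a hv0
      have hdW : d⁄dX K W = -(d⁄dX K (P K (-β)) * (1 - v)) + P K (-β) * d⁄dX K v := by
        rw [hW]
        simp only [map_sub, Derivation.map_one_eq_zero, Derivation.leibniz, smul_eq_mul]
        ring
      have hDE : P K (-β) * d⁄dX K (P K (a*β)) = - (cc K a * d⁄dX K (P K (-β)) * P K (a*β)) := by
        rw [P_deriv, P_deriv]
        have e1 : P K (-β) * P K (a*β+1) = P K (-β+1) * P K (a*β) := by
          rw [P_mul, P_mul]; congr 1; ring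
        rw [cc_mul, cc_neg]
        linear_combination (cc K a * cc K β) * e1
      rw [Derivation.leibniz, hdW]
      simp only [smul_eq_mul]
      have hW1 : 1 - W = P K (-β) * (1 - v) := by rw [hW]; ring
      rw [hW1]
      linear_combination ((1 - v) * Q a v) * hDE + P K (-β) * P K (a*β) * h1
    · simp [Q_const _ hW0, Q_const _ hv0]
  have hB' : (1 - X) * d⁄dX K B = cc K β * P K (-β) := by
    rw [hB]
    simp only [map_sub, Derivation.map_one_eq_zero]
    have := P_ode (K := K) (-β)
    rw [cc_neg] at this
    linear_combination -this
  have hXP : (1 - X) * P K (a*β) = P K (-β) := by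
    rw [← P_neg_one, P_mul]; congr 1; rw [haβ]; ring
  rw [hS, map_sub, mul_sub, hB', hR, hQ]
  linear_combination (cc K β * PowerSeries.C u * Q a v) * hXP

end ext

section main
open Topology

lemma phi_eq {a : ℝ} (ha : 0 < a) (δ : ℕ) :
    Real.Gamma ((δ:ℝ) + a) / Real.Gamma a / (δ.factorial : ℝ) = c a δ := by
  unfold c
  congr 1
  induction δ with
  | zero => simp [(Real.Gamma_pos_of_pos ha).ne']
  | succ n ih =>
    rw [Finset.prod_range_succ, ← ih]
    have h : ((n+1 : ℕ) : ℝ) + a = (n + a) + 1 := by push_cast; ring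
    rw [h, Real.Gamma_add_one (by positivity)]
    ring

lemma main_asy {a p β θ : ℝ} (hβ0 : 0 < β) (hβ1 : β < 1) (hp : 0 < p)
    (ha : 0 < a) (hθ : θ = β * a * p + β)
    {u : ℝ⟦X⟧} (hu : coeff 0 u = 1) {S V : ℝ⟦X⟧⟦X⟧}
    (hS0 : constantCoeff S = 0) (hTS : T 0 S = 0) (hV : V = P ℝ⟦X⟧ β * S)
    (hode : (1 - X) * d⁄dX ℝ⟦X⟧ S = cc ℝ⟦X⟧ β * ((P ℝ⟦X⟧ (-β) * Q a (cc ℝ⟦X⟧ p * V)) * PowerSeries.C u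
      - P ℝ⟦X⟧ (-β)))
    (hu1 : coeff 1 u = 1)
    (s : ℝ⟦X⟧) (hs0 : coeff 0 s = 0) (hs1 : coeff 1 s = β / θ)
    (hs : ∀ k : ℕ, 2 ≤ k → ((k:ℝ) - 1) * (θ / β) * coeff k s = ∑ j ∈ Finset.Icc 2 k, c a j * p ^ j * coeff k (s ^ j)) :
    ∀ k : ℕ, 1 ≤ k → Asy (T k S) (k * θ - β) (coeff k s) := by
  have hap : 0 < β * a * p := by positivity
  have hθ0 : 0 < θ := by rw [hθ]; positivity
  have hβθ : β < θ := by rw [hθ]; linarith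
  have hVk : ∀ k, T k V = P ℝ β * T k S := by
    intro k; rw [hV, emb_P, T_emb]
  have hTV : T 0 V = 0 := by rw [hVk, hTS, mul_zero]
  have hV0 : constantCoeff V = 0 := by simp [hV, hS0]
  have hPP : P ℝ (-β) * P ℝ β = 1 := by rw [P_mul, neg_add_cancel, P_zero]
  have hGam : Real.Gamma (-β) ≠ 0 := by
    apply Real.Gamma_ne_zero
    intro m h
    have h1 : β = m := by linarith
    rcases m with _ | m
    · simp at h1; linarith
    · push_cast at h1
      have : (0:ℝ) ≤ m := by positivity
      linarith
  -- the auxiliary series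
  set Z : ℕ → ℕ → ℝ⟦X⟧ := fun m j => P ℝ (-β) * T m (V ^ j) with hZ
  have hZ00 : Z 0 0 = P ℝ (-β) := by
    simp only [hZ, pow_zero]; rw [← emb_one, T_zero_emb, mul_one]
  have hZ0 : ∀ m, 1 ≤ m → Z m 0 = 0 := by
    intro m hm
    simp only [hZ, pow_zero]; rw [← emb_one, T_emb' m hm, mul_zero]
  have hZs : ∀ m j, Z m (j+1) = T m (S * V ^ j) := by
    intro m j
    simp only [hZ]
    have : V ^ (j+1) = emb (P ℝ β) * (S * V ^ j) := by rw [pow_succ', ← emb_P]; nth_rewrite 1 [hV]; ring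
    rw [this, T_emb, ← mul_assoc, hPP, one_mul]
  have hZ1 : ∀ m, Z m 1 = T m S := by intro m; rw [hZs]; simp
  have hTD : ∀ m, T m (P ℝ⟦X⟧ (-β) * Q a (cc ℝ⟦X⟧ p * V)) = ∑ j ∈ Finset.range (m+1), cc ℝ (c a j * p ^ j) * Z m j := by
    intro m
    rw [emb_P, T_emb, T_Q a p hTV hV0, Finset.mul_sum]
    refine Finset.sum_congr rfl fun j _ => ?_
    simp only [hZ]; ring
  have hodek : ∀ k, 1 ≤ k → (1 - X) * d⁄dX ℝ (T k S) = cc ℝ β *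
      ∑ m ∈ Finset.range (k+1), cc ℝ (coeff (k - m) u) * ∑ j ∈ Finset.range (m+1), cc ℝ (c a j * p ^ j) * Z m j := by
    intro k hk
    have h1 := congrArg (T k) hode
    rw [emb_X, T_emb, T_deriv, emb_cc β, T_emb, T_sub, T_C] at h1
    rw [h1]
    have : T k (P ℝ⟦X⟧ (-β)) = 0 := by rw [emb_P, T_emb' k hk]
    rw [this, sub_zero]
    simp_rw [hTD]
  have hca1 : c a 1 = a := by simp [c]
  intro k
  induction k using Nat.strong_induction_on with
  | _ k ih =>
  intro hk
  rcases Nat.eq_or_lt_of_le hk with hk1 | hk2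
  · -- k = 1
    subst hk1
    have h1 := hodek 1 le_rfl
    simp only [Finset.sum_range_succ, Finset.sum_range_zero, hZ00, hZ0 1 le_rfl, hZ1, c_zero, hca1] at h1
    simp only [pow_zero, zero_add, hu, hu1, pow_one, mul_one, mul_zero, cc_one, one_mul, tsub_zero, tsub_self] at h1
    have hsol : T 1 S = cc ℝ (β/θ) * (P ℝ (θ - β) - P ℝ (-β)) := by
      rw [← sub_eq_zero]
      apply uniq0 X (cc ℝ (θ - β))
      · simp
      · have e1 := P_ode (K := ℝ) (θ - β)
        have e2 := P_ode (K := ℝ) (-β)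
        have e3 : cc ℝ (θ - β) = cc ℝ β * cc ℝ (a * p) := by
          rw [← cc_mul]; congr 1; rw [hθ]; ring
        have e4 : cc ℝ (β/θ) * (cc ℝ β + cc ℝ (θ - β)) = cc ℝ β := by
          rw [← cc_add, ← cc_mul]; congr 1; field_simp; ring
        rw [cc_neg] at e2
        simp only [map_sub, Derivation.leibniz, d_cc, smul_eq_mul]
        linear_combination h1 - cc ℝ (β/θ) * e1 + cc ℝ (β/θ) * e2 - T 1 S * e3 - P ℝ (-β) * e4
      · have : constantCoeff (T 1 S) = 0 := by
          rw [← coeff_zero_eq_constantCoeff_apply, coeff_T, coeff_zero_eq_constantCoeff_apply (φ := S), hS0]; simp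
        simp [this]
    have hpos : 0 < θ - β := sub_pos.mpr hβθ
    have e : ((1:ℕ):ℝ) * θ - β = θ - β := by push_cast; ring
    rw [e, hs1, hsol]
    have h2 := asy_cmul (β/θ) (asy_add (asy_P hpos) (asy_cmul (-1) (asy_P_lower hGam hpos (by linarith : -β < θ - β))))
    have e5 : P ℝ (θ - β) - P ℝ (-β) = P ℝ (θ - β) + cc ℝ (-1) * P ℝ (-β) := by simp; ring
    rw [e5]
    simpa using h2
  · -- k ≥ 2
    have hpos : ∀ m : ℕ, 1 ≤ m → 0 < (m:ℝ) * θ - β := by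
      intro m hm
      have : (1:ℝ) ≤ m := by exact_mod_cast hm
      nlinarith
    have hkr : (2:ℝ) ≤ k := by exact_mod_cast hk2
    have hV_asy : ∀ i, 1 ≤ i → i < k → Asy (T i V) (i * θ) (coeff i s) := by
      intro i hi hik
      rw [hVk]
      have := asy_mul hβ0 (hpos i hi) (asy_P hβ0) (ih i hik hi)
      rw [one_mul] at this
      convert this using 1
      ring
    have hVp : ∀ j, T 0 (V ^ (j+1)) = 0 := fun j => T_pow_zero hTV (j+1) 0 (by omega)
    have hsp : ∀ j, coeff 0 (s ^ (j+1)) = 0 := by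
      intro j
      rw [coeff_zero_eq_constantCoeff_apply] at hs0 ⊢
      rw [map_pow, hs0, zero_pow (by omega)]
    have hVpow : ∀ j, ∀ i, 1 ≤ i → i < k → Asy (T i (V ^ (j+1))) (i * θ) (coeff i (s ^ (j+1))) := by
      intro j
      induction j with
      | zero => simpa using hV_asy
      | succ j ihj =>
        intro i hi hik
        rw [pow_succ V, pow_succ s]
        have := prod_asy (σ := 0) (N := k) hθ0 hθ0 (hVp j) hTV (hsp j) hs0 (by simpa using ihj) hV_asy i hik.le
        simpa using this
    have hZa : ∀ j, ∀ m ≤ k, Asy (Z m (j+2)) (m * θ - β) (coeff m (s ^ (j+2))) := by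
      intro j m hm
      rw [hZs, pow_succ' s]
      exact prod_asy hθ0 hβθ hTS (hVp j) hs0 (hsp j) (fun i hi hik => ih i hik hi) (hVpow j) m hm
    have hZb : ∀ m, 1 ≤ m → m < k → ∀ j, 1 ≤ j → Asy (Z m j) (m * θ - β) (coeff m (s ^ j)) := by
      intro m hm hmk j hj
      rcases Nat.eq_or_lt_of_le hj with h | h
      · rw [← h, hZ1, pow_one]; exact ih m hmk hm
      · obtain ⟨i, rfl⟩ := Nat.exists_eq_add_of_le' h
        exact hZa i m hmk.le
    have hZc : ∀ m < k, ∀ j, Asy (Z m j) (k * θ - β) 0 := by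
      intro m hmk j
      rcases Nat.eq_zero_or_pos m with hm | hm
      · subst hm
        rcases Nat.eq_zero_or_pos j with hj | hj
        · subst hj
          rw [hZ00]
          exact asy_P_lower hGam (hpos k hk) (by nlinarith)
        · have : Z 0 j = 0 := by simp only [hZ]; rw [T_pow_zero hTV j 0 hj, mul_zero]
          rw [this]; exact asy_zero _
      · rcases Nat.eq_zero_or_pos j with hj | hj
        · rw [hj, hZ0 m hm]; exact asy_zero _
        · refine asy_lower (hZb m hm hmk j hj) (hpos m hm) ?_
          have : (m:ℝ) < k := by exact_mod_cast hmk
          nlinarith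
    set H1 : ℝ⟦X⟧ := ∑ j ∈ Finset.Icc 2 k, cc ℝ (c a j * p ^ j) * Z k j with hH1
    set H2 : ℝ⟦X⟧ := ∑ m ∈ Finset.range k, cc ℝ (coeff (k - m) u) * ∑ j ∈ Finset.range (m+1), cc ℝ (c a j * p ^ j) * Z m j with hH2
    have hA1 : Asy H1 (k * θ - β) (∑ j ∈ Finset.Icc 2 k, c a j * p ^ j * coeff k (s ^ j)) := by
      refine asy_sum _ _ _ _ fun j hj => asy_cmul _ ?_
      rw [Finset.mem_Icc] at hj
      obtain ⟨i, rfl⟩ := Nat.exists_eq_add_of_le' hj.1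
      exact hZa i k le_rfl
    have hA2 : Asy H2 (k * θ - β) 0 := by
      have := asy_sum (Finset.range k) (fun m => cc ℝ (coeff (k - m) u) * ∑ j ∈ Finset.range (m+1), cc ℝ (c a j * p ^ j) * Z m j)
        (k * θ - β) (fun m => coeff (k-m) u * ∑ j ∈ Finset.range (m+1), c a j * p ^ j * 0) fun m hm =>
          asy_cmul _ (asy_sum _ _ _ _ fun j _ => asy_cmul _ (hZc m (Finset.mem_range.mp hm) j))
      simp only [mul_zero, Finset.sum_const_zero] at this
      exact this
    have hA := asy_cmul β (asy_add hA1 hA2)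
    rw [← hs k hk2, add_zero] at hA
    have hfin : (1 - X) * d⁄dX ℝ (T k S) = cc ℝ (θ - β) * T k S + cc ℝ β * (H1 + H2) := by
      rw [hodek k hk, Finset.sum_range_succ, ← hH2]
      have e1 : ∑ j ∈ Finset.range (k+1), cc ℝ (c a j * p ^ j) * Z k j = cc ℝ (a * p) * T k S + H1 := by
        rw [Finset.range_eq_Ico, Finset.sum_eq_sum_Ico_succ_bot (by omega), Finset.sum_eq_sum_Ico_succ_bot (by omega),
          hZ0 k hk, hZ1, hca1, hH1]
        simp only [zero_add, mul_zero, pow_one]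
        congr 1
      rw [e1]
      have e3 : cc ℝ (θ - β) = cc ℝ β * cc ℝ (a * p) := by
        rw [← cc_mul]; congr 1; rw [hθ]; ring
      rw [e3, tsub_self, hu, cc_one]
      ring
    have hres := asy_ode (sub_pos.mpr hβθ) (by nlinarith : θ - β < k * θ - β) hfin hA
    convert hres using 1
    have : (k:ℝ) - 1 ≠ 0 := by linarith
    have e : (k:ℝ) * θ - β - (θ - β) = (k - 1) * θ := by ring
    rw [e]
    field_simp

end main

section fin
open Topology

lemma coeff_T_Rs (r : ℕ → ℕ → ℝ) (β : ℝ) (k n : ℕ) :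
    coeff n (T k (Rs r β (PowerSeries.exp ℝ)))
      = β ^ n / (n.factorial : ℝ) * ((∑ j ∈ Finset.Icc 1 n, (j:ℝ) ^ k * r n j) / (k.factorial : ℝ)) := by
  rw [coeff_T, Rs, coeff_mk, algMap_eq, coeff_C_mul, rho, map_sum, Finset.sum_div]
  congr 1
  refine Finset.sum_congr rfl fun j _ => ?_
  rw [algMap_eq, coeff_C_mul, exp_pow_eq_rescale_exp, coeff_rescale, coeff_exp]
  simp
  ring

lemma Bs_emb (b : ℕ → ℝ) (β : ℝ) : Bs ℝ⟦X⟧ b β = emb (Bs ℝ b β) := by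
  ext n
  simp [Bs, emb]

lemma final {α p : ℝ} (hα : 0 < α) (hp0 : 0 < p)
    (r : ℕ → ℕ → ℝ) (b : ℕ → ℝ)
    (hrec : clusterRec p (fun δ => Real.Gamma ((δ : ℝ) + 1 / α) / Real.Gamma (1 / α)) r b)
    (C : ℕ → ℝ) (hC1 : C 1 = α / (p + α))
    (hCk : ∀ k : ℕ, 2 ≤ k →
      ((k : ℝ) - 1) * (p / α + 1) * C k
        = ∑ j ∈ Finset.Icc 2 k,
            p ^ j * (Real.Gamma (1 / α + (j : ℝ)) / Real.Gamma (1 / α)) * bellPartial k j C)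
    (k : ℕ) (hk : 1 ≤ k) :
    Tendsto (fun n : ℕ =>
        ((∑ j ∈ Finset.Icc 1 n, (j : ℝ) ^ k * r n j) / b n)
          / (n : ℝ) ^ ((k : ℝ) * (p + α) / (1 + α)))
      atTop
      (𝓝 (C k * (1 + α) * Real.Gamma (1 / (1 + α))
        / (α * Real.Gamma (((k : ℝ) * p + α * ((k : ℝ) - 1)) / (1 + α))))) := by
  obtain ⟨a, ha⟩ : ∃ a, a = 1 / α := ⟨_, rfl⟩
  obtain ⟨β, hβ⟩ : ∃ β, β = α / (1 + α) := ⟨_, rfl⟩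
  obtain ⟨θ, hθ⟩ : ∃ θ, θ = (p + α) / (1 + α) := ⟨_, rfl⟩
  have ha0 : 0 < a := by rw [ha]; positivity
  have hβ0 : 0 < β := by rw [hβ]; positivity
  have hβ1 : β < 1 := by rw [hβ, div_lt_one (by positivity)]; linarith
  have hab : (a + 1) * β = 1 := by rw [ha, hβ]; field_simp
  have haβ : a * β = 1 - β := by linarith
  have hθ' : θ = β * a * p + β := by rw [hθ, ha, hβ]; field_simp
  have hap : 0 < β * a * p := by positivity
  have hβθ : β < θ := by rw [hθ']; linarith
  have hθ0 : 0 < θ := by linarith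
  have hφ : ∀ δ : ℕ, (fun δ : ℕ => Real.Gamma ((δ : ℝ) + 1 / α) / Real.Gamma (1 / α)) δ / (δ.factorial : ℝ)
      = c a δ := by
    intro δ; rw [← phi_eq ha0 δ, ha]
  have hGam : Real.Gamma (-β) ≠ 0 := by
    apply Real.Gamma_ne_zero
    intro m h
    have h1 : β = m := by linarith
    rcases m with _ | m
    · simp at h1; linarith
    · push_cast at h1
      have : (0:ℝ) ≤ m := by positivity
      linarith
  have hB1 := B_eq hrec hφ hab
  have hB : Bs ℝ⟦X⟧ b β = 1 - P ℝ⟦X⟧ (-β) := by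
    rw [Bs_emb, hB1, emb_P]; simp [emb]
  obtain ⟨R, hR⟩ : ∃ R, R = Rs r β (PowerSeries.exp ℝ) := ⟨_, rfl⟩
  have hRode := Rs_ode (β := β) hrec hφ (PowerSeries.exp ℝ)
  have hR0 : constantCoeff R = 0 := by rw [hR, Rs_const]
  rw [← hR] at hRode
  obtain ⟨S, hS⟩ : ∃ S, S = R - Bs ℝ⟦X⟧ b β := ⟨_, rfl⟩
  have hode := S_ode haβ hR0 hRode hB hS rfl
  have hS0 : constantCoeff S = 0 := by rw [hS, map_sub, hR0, hB]; simp
  have hTS : T 0 S = 0 := by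
    ext n
    rw [hS, T_sub, map_sub, Bs_emb, T_zero_emb, hR, coeff_T_Rs]
    simp [Bs, hrec.1 n]
  have hs := main_asy hβ0 hβ1 hp0 ha0 hθ' (by simp) hS0 hTS rfl hode (by simp) (egf C)
    (by simp [egf]) (by simp only [egf, coeff_mk, hC1, hβ, hθ]; simp; field_simp) (by
      intro k hk
      have hkf : (k.factorial : ℝ) ≠ 0 := by positivity
      apply mul_right_cancel₀ hkf
      have h := hCk k hk
      have e : θ / β = p / α + 1 := by rw [hθ, hβ]; field_simp
      rw [e, egf, coeff_mk, if_neg (by omega)]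
      rw [show ((k:ℝ) - 1) * (p / α + 1) * (C k / (k.factorial:ℝ)) * (k.factorial:ℝ)
        = ((k:ℝ) - 1) * (p / α + 1) * C k by field_simp, h, Finset.sum_mul]
      refine Finset.sum_congr rfl fun j hj => ?_
      rw [Finset.mem_Icc] at hj
      have hb := bell C k j (by omega) hj.2
      rw [egf] at hb
      rw [mul_assoc (c a j * p ^ j), hb, ← phi_eq ha0 j, ← ha, add_comm a]
      have : (j.factorial : ℝ) ≠ 0 := by positivity
      field_simp) k hk
  have hk1 : (1:ℝ) ≤ k := by exact_mod_cast hk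
  have he0 : 0 < k * θ - β := by nlinarith
  have hG1 : Real.Gamma (k * θ - β) ≠ 0 := (Real.Gamma_pos_of_pos he0).ne'
  have hc1 := c_asymp (k * θ - β) hG1
  have hc2 := c_asymp (-β) hGam
  have hkf : (k.factorial : ℝ) ≠ 0 := by positivity
  unfold Asy at hs
  have hlim := ((hs.mul hc1).const_mul (k.factorial : ℝ)).div hc2.neg (by simpa using hGam)
  have hval : (k.factorial : ℝ) * (coeff k (egf C) * (1 / Real.Gamma (k * θ - β))) / -(1 / Real.Gamma (-β))
      = C k * (1 + α) * Real.Gamma (1 / (1 + α))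
        / (α * Real.Gamma (((k : ℝ) * p + α * ((k : ℝ) - 1)) / (1 + α))) := by
    have e1 : ((k : ℝ) * p + α * ((k : ℝ) - 1)) / (1 + α) = k * θ - β := by
      rw [hθ, hβ]; field_simp; ring
    have e2 : 1 / (1 + α) = -β + 1 := by rw [hβ]; field_simp; ring
    rw [e1, e2, Real.Gamma_add_one (by linarith), egf, coeff_mk, if_neg (by omega)]
    have e3 : (1 + α) * β = α := by rw [hβ]; field_simp
    rw [← sub_eq_zero]
    have : α * (k.factorial : ℝ) ≠ 0 := by positivity
    field_simp
    linear_combination (C k * Real.Gamma (-β)) * e3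
  rw [hval] at hlim
  refine hlim.congr' ?_
  filter_upwards [eventually_ge_atTop 1] with n hn
  have hn0 : (0:ℝ) < n := by exact_mod_cast hn
  have hT : coeff n (T k S) = β ^ n / (n.factorial : ℝ) * ((∑ j ∈ Finset.Icc 1 n, (j:ℝ) ^ k * r n j) / (k.factorial : ℝ)) := by
    rw [hS, T_sub, Bs_emb, T_emb' k hk, sub_zero, hR, coeff_T_Rs]
  have hbn : c (-β) n = - (β ^ n / (n.factorial : ℝ) * b n) := by
    have h := congrArg (coeff n) hB1
    rw [map_sub, coeff_P', coeff_one, if_neg (by omega), Bs, coeff_mk] at h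
    simp only [Algebra.algebraMap_self, RingHom.id_apply] at h
    linarith
  have hcp := c_pos he0 n
  have hpow : (n:ℝ) ^ (1 - (-β)) = (n:ℝ) ^ (1 - (k * θ - β)) * (n:ℝ) ^ ((k : ℝ) * (p + α) / (1 + α)) := by
    rw [← Real.rpow_add hn0]; congr 1; rw [hθ]; ring
  simp only [Pi.div_apply]
  rw [hT, hbn, hpow]
  have h1 : (n:ℝ) ^ (1 - (k * θ - β)) ≠ 0 := (Real.rpow_pos_of_pos hn0 _).ne'
  have h2 : (n:ℝ) ^ ((k : ℝ) * (p + α) / (1 + α)) ≠ 0 := (Real.rpow_pos_of_pos hn0 _).ne'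
  have h3 : β ^ n / (n.factorial : ℝ) ≠ 0 := by positivity
  generalize β ^ n / (n.factorial : ℝ) = w at *
  generalize (n:ℝ) ^ (1 - (k * θ - β)) = x at *
  generalize (n:ℝ) ^ ((k : ℝ) * (p + α) / (1 + α)) = y at *
  have h4 := hcp.ne'
  rcases eq_or_ne (b n) 0 with hb | hb
  · simp [hb]
  field_simp

end fin

end RC
end

/-- for linear preferential attachment trees with parameter `α > 0`,
the `k`-th moment of the root-cluster size, normalized by `n^{k(p+α)/(1+α)}`,
converges to `C_k (1+α) Γ(1/(1+α)) / (α Γ((kp+α(k-1))/(1+α)))`. -/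
theorem stmt6 (α p : ℝ) (hα : 0 < α) (hp0 : 0 < p) (hp1 : p < 1)
    (r : ℕ → ℕ → ℝ) (b : ℕ → ℝ)
    (hrec : clusterRec p (fun δ => Real.Gamma ((δ : ℝ) + 1 / α) / Real.Gamma (1 / α)) r b)
    (C : ℕ → ℝ) (hC1 : C 1 = α / (p + α))
    (hCk : ∀ k : ℕ, 2 ≤ k →
      ((k : ℝ) - 1) * (p / α + 1) * C k
        = ∑ j ∈ Finset.Icc 2 k,
            p ^ j * (Real.Gamma (1 / α + (j : ℝ)) / Real.Gamma (1 / α)) * bellPartial k j C)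
    (k : ℕ) (hk : 1 ≤ k) :
    Tendsto (fun n : ℕ =>
        ((∑ j ∈ Finset.Icc 1 n, (j : ℝ) ^ k * r n j) / b n)
          / (n : ℝ) ^ ((k : ℝ) * (p + α) / (1 + α)))
      atTop
      (nhds (C k * (1 + α) * Real.Gamma (1 / (1 + α))
        / (α * Real.Gamma (((k : ℝ) * p + α * ((k : ℝ) - 1)) / (1 + α))))) := by
  exact RC.final hα hp0 r b hrec C hC1 hCk k hk
end
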